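/- arXiv:1605.00773 — 3 statements merged into one kernel-verified Lean document; each statement's English description precedes it below -/
import Mathlib

section
/- For every ε > 0 and every integer t_0 there exist T_0 and n_0 such that the following holds. For every 3-graph H on n ≥ n_0 vertices there exist t with t_0 ≤ t ≤ T_0 and a partition V(H) = V_1 ∪ … ∪ V_t with |V_1| ≤ |V_2| ≤ … ≤ |V_t| ≤ |V_1| + 1 such that for all but fewer than ε·C(t,3) triples {i_1, i_2, i_3} of partition classes, the 3-partite 3-graph H[V_{i_1}, V_{i_2}, V_{i_3}] is ε-regular. -/
open Finset
open scoped Classical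

/-- The number of edges of the 3-graph `H` with one vertex in each of the (disjoint)
sets `A`, `B`, `C`. -/
noncomputable def eH {V : Type} [DecidableEq V] (H : Finset (Finset V))
    (A B C : Finset V) : ℕ :=
  ((A ×ˢ B ×ˢ C).filter fun x => ({x.1, x.2.1, x.2.2} : Finset V) ∈ H).card

/-- The density of the 3-graph `H` with respect to the triple `(A,B,C)`. -/
noncomputable def dH {V : Type} [DecidableEq V] (H : Finset (Finset V))
    (A B C : Finset V) : ℝ :=
  (eH H A B C : ℝ) / ((A.card : ℝ) * (B.card : ℝ) * (C.card : ℝ))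

/-- The 3-partite 3-graph `H[V1,V2,V3]` is `ε`-regular. -/
def EpsRegular {V : Type} [DecidableEq V] (ε : ℝ) (H : Finset (Finset V))
    (V1 V2 V3 : Finset V) : Prop :=
  ∀ A1 ⊆ V1, ∀ A2 ⊆ V2, ∀ A3 ⊆ V3,
    ε * (V1.card : ℝ) ≤ (A1.card : ℝ) → ε * (V2.card : ℝ) ≤ (A2.card : ℝ) →
    ε * (V3.card : ℝ) ≤ (A3.card : ℝ) →
    |dH H A1 A2 A3 - dH H V1 V2 V3| ≤ ε

/-!
The energy of a partition is the mean square of the conditional expectation of the edge indicator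
with respect to the boxes spanned by the classes; it lies between `0` and `1`, and by Pythagoras a
refinement raises it by the mean square difference of the two conditional expectations. If an
equipartition has many irregular tuples of classes, each of them contains a large box of deviating
density, and by Cauchy-Schwarz cutting all classes along the sides of these boxes raises the energy
by a fixed amount. Chopping the refinement into many classes of equal size spoils it only on the few
vertices left over, which costs at most half of the gain. Hence after a bounded number of rounds
there are few irregular tuples.
-/

open scoped BigOperators

section FiberMean

variable {X α β : Type*} [Fintype X]

/-- The class of a labelling `g` with label `a`. Throughout, a partition of a finite type is encoded
by a labelling, whose fibers are the classes. -/
noncomputable def fiber (g : X → α) (a : α) : Finset X := {x | g x = a}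

@[simp]
lemma mem_fiber {g : X → α} {a : α} {x : X} : x ∈ fiber g a ↔ g x = a := by simp [fiber]

lemma disjoint_fiber (g : X → α) {a b : α} (hab : a ≠ b) : Disjoint (fiber g a) (fiber g b) :=
  disjoint_left.2 fun _ ha hb => hab ((mem_fiber.1 ha).symm.trans (mem_fiber.1 hb))

/-- The conditional expectation of `f`, under the uniform measure, with respect to the partition
into the fibers of `g`. -/
noncomputable def fiberMean (g : X → α) (f : X → ℝ) (x : X) : ℝ := 𝔼 y ∈ fiber g (g x), f y

lemma fiberMean_factorsThrough (g : X → α) (f : X → ℝ) : (fiberMean g f).FactorsThrough g :=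
  fun x y hxy => by rw [fiberMean, fiberMean, hxy]

lemma fiberMean_congr {g : X → α} {g' : X → β} {x : X} (h : ∀ y, g y = g x ↔ g' y = g' x)
    (f : X → ℝ) : fiberMean g f x = fiberMean g' f x :=
  expect_congr (by ext y; simp [h y]) fun _ _ => rfl

lemma abs_fiberMean_le_one (g : X → α) {f : X → ℝ} (hf : ∀ x, |f x| ≤ 1) (x : X) :
    |fiberMean g f x| ≤ 1 :=
  (abs_expect_le _ _).trans (expect_le ⟨x, mem_fiber.2 rfl⟩ fun y _ => hf y)

lemma sum_mul_fiberMean {g : X → α} {h : X → ℝ} (hh : h.FactorsThrough g) (f : X → ℝ) :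
    ∑ x, h x * fiberMean g f x = ∑ x, h x * f x := by
  have expand (x : X) : h x * fiberMean g f x =
      ∑ y ∈ fiber g (g x), h y * f y / #(fiber g (g y)) := by
    rw [fiberMean, expect_eq_sum_div_card, ← mul_div_assoc, mul_sum, sum_div]
    refine sum_congr rfl fun y hy => ?_
    rw [mem_fiber.1 hy, hh (mem_fiber.1 hy)]
  calc ∑ x, h x * fiberMean g f x
      = ∑ y, ∑ _x ∈ fiber g (g y), h y * f y / #(fiber g (g y)) := by
        simp_rw [expand]
        exact sum_comm' fun _ _ => by simp [eq_comm]
    _ = ∑ y, h y * f y := sum_congr rfl fun y _ => by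
        have hy : (#(fiber g (g y)) : ℝ) ≠ 0 :=
          Nat.cast_ne_zero.2 (card_ne_zero_of_mem (mem_fiber.2 rfl))
        rw [sum_const, nsmul_eq_mul, mul_div_cancel₀ _ hy]

lemma sum_fiberMean_of_mem_factorsThrough {g : X → α} {S : Finset X}
    (hS : (· ∈ S).FactorsThrough g) (f : X → ℝ) : ∑ x ∈ S, fiberMean g f x = ∑ x ∈ S, f x := by
  have hind : (fun x => if x ∈ S then (1 : ℝ) else 0).FactorsThrough g :=
    fun _ _ hxy => by simp only [hS hxy]
  simpa using sum_mul_fiberMean hind f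

lemma sum_sq_fiberMean_sub_fiberMean {g : X → α} {g' : X → β} (hg : g.FactorsThrough g')
    (f : X → ℝ) :
    ∑ x, (fiberMean g' f x - fiberMean g f x) ^ 2 =
      ∑ x, fiberMean g' f x ^ 2 - ∑ x, fiberMean g f x ^ 2 := by
  have hfactors : (fiberMean g f).FactorsThrough g' :=
    fun _ _ hxy => fiberMean_factorsThrough g f (hg hxy)
  have hfine := sum_mul_fiberMean hfactors f
  have hcoarse := sum_mul_fiberMean (fiberMean_factorsThrough g f) f
  have horth : ∑ x, fiberMean g f x * fiberMean g' f x = ∑ x, fiberMean g f x ^ 2 := by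
    simp_rw [hfine, ← hcoarse, sq]
  simp_rw [sub_sq', sum_sub_distrib, sum_add_distrib, mul_assoc, ← mul_sum,
    mul_comm (fiberMean g' f _), horth]
  ring

lemma sq_mul_card_le_sum_sq_fiberMean_sub {g : X → α} {S : Finset X}
    (hS : (· ∈ S).FactorsThrough g) {f : X → ℝ} {ε d : ℝ} (hε : 0 ≤ ε)
    (hd : ε ≤ |𝔼 x ∈ S, f x - d|) :
    ε ^ 2 * #S ≤ ∑ x ∈ S, (fiberMean g f x - d) ^ 2 := by
  obtain rfl | hne := S.eq_empty_or_nonempty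
  · simp
  have hpos : (0 : ℝ) < #S := by exact_mod_cast hne.card_pos
  have hsum : ∑ x ∈ S, (fiberMean g f x - d) = #S * (𝔼 x ∈ S, f x - d) := by
    rw [sum_sub_distrib, sum_fiberMean_of_mem_factorsThrough hS, expect_eq_sum_div_card, mul_sub,
      mul_div_cancel₀ _ hpos.ne', sum_const, nsmul_eq_mul]
  refine le_of_mul_le_mul_left ?_ hpos
  calc #S * (ε ^ 2 * #S) = #S ^ 2 * ε ^ 2 := by ring
    _ ≤ #S ^ 2 * |𝔼 x ∈ S, f x - d| ^ 2 := by gcongr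
    _ = (∑ x ∈ S, (fiberMean g f x - d)) ^ 2 := by rw [sq_abs, hsum, mul_pow]
    _ ≤ #S * ∑ x ∈ S, (fiberMean g f x - d) ^ 2 := sq_sum_le_card_mul_sum_sq

end FiberMean

section Energy

variable {X α β : Type*} [Fintype X]

/-- The energy (index) of the partition into the fibers of `g` with respect to `f`: the mean square
of the conditional expectation of `f`. -/
noncomputable def energy (g : X → α) (f : X → ℝ) : ℝ := 𝔼 x, fiberMean g f x ^ 2

lemma energy_nonneg (g : X → α) (f : X → ℝ) : 0 ≤ energy g f :=
  expect_nonneg fun _ _ => sq_nonneg _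

lemma energy_le_one [Nonempty X] (g : X → α) {f : X → ℝ} (hf : ∀ x, |f x| ≤ 1) :
    energy g f ≤ 1 :=
  expect_le univ_nonempty fun x _ => (sq_le_one_iff_abs_le_one _).2 (abs_fiberMean_le_one g hf x)

lemma energy_sub_energy {g : X → α} {g' : X → β} (hg : g.FactorsThrough g') (f : X → ℝ) :
    energy g' f - energy g f =
      (∑ x, (fiberMean g' f x - fiberMean g f x) ^ 2) / Fintype.card X := by
  rw [energy, energy, Fintype.expect_eq_sum_div_card, Fintype.expect_eq_sum_div_card, ← sub_div,
    sum_sq_fiberMean_sub_fiberMean hg]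

lemma energy_mono {g : X → α} {g' : X → β} (hg : g.FactorsThrough g') (f : X → ℝ) :
    energy g f ≤ energy g' f :=
  sub_nonneg.1 <| energy_sub_energy hg f ▸ by positivity

lemma energy_le_energy_add_card_div {g : X → α} {g' : X → β} {B : Finset X}
    (hB : ∀ x ∉ B, ∀ y, g y = g x → g' y = g' x) {f : X → ℝ} (hf : ∀ x, |f x| ≤ 1) :
    energy g' f ≤ energy g f + #B / Fintype.card X := by
  have hpt (x : X) : fiberMean (fun x => (g x, g' x)) f x ^ 2 ≤
      fiberMean g f x ^ 2 + if x ∈ B then 1 else 0 := by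
    by_cases hx : x ∈ B
    · have hle : fiberMean (fun x => (g x, g' x)) f x ^ 2 ≤ 1 :=
        (sq_le_one_iff_abs_le_one _).2 (abs_fiberMean_le_one _ hf x)
      rw [if_pos hx]
      exact le_add_of_nonneg_of_le (sq_nonneg _) hle
    · have hfib (y : X) : (g y, g' y) = (g x, g' x) ↔ g y = g x := by
        simpa only [Prod.mk.injEq, and_iff_left_iff_imp] using hB x hx y
      rw [fiberMean_congr hfib, if_neg hx, add_zero]
  calc energy g' f ≤ energy (fun x => (g x, g' x)) f :=
        energy_mono (fun _ _ hxy => (Prod.mk.inj hxy).2) f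
    _ ≤ 𝔼 x, (fiberMean g f x ^ 2 + if x ∈ B then 1 else 0) := expect_le_expect fun x _ => hpt x
    _ = energy g f + #B / Fintype.card X := by
        rw [expect_add_distrib, energy, Fintype.expect_eq_sum_div_card (fun x => ite _ _ _)]
        simp

lemma energy_add_le_energy_of_le_abs_expect_sub {g : X → α} {g' : X → β}
    (hg : g.FactorsThrough g') {f : X → ℝ} {ε : ℝ} (hε : 0 ≤ ε) {I : Finset α}
    {S : α → Finset X} (hsub : ∀ a ∈ I, S a ⊆ fiber g a)
    (hmem : ∀ a ∈ I, (· ∈ S a).FactorsThrough g')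
    (hdev : ∀ a ∈ I, ε ≤ |𝔼 x ∈ S a, f x - 𝔼 x ∈ fiber g a, f x|) :
    energy g f + (∑ a ∈ I, ε ^ 2 * #(S a)) / Fintype.card X ≤ energy g' f := by
  have hdisj : (I : Set α).PairwiseDisjoint S := fun a ha b hb hab =>
    (disjoint_fiber g hab).mono (hsub a ha) (hsub b hb)
  rw [← le_sub_iff_add_le', energy_sub_energy hg]
  gcongr
  calc ∑ a ∈ I, ε ^ 2 * #(S a)
      ≤ ∑ a ∈ I, ∑ x ∈ S a, (fiberMean g' f x - 𝔼 y ∈ fiber g a, f y) ^ 2 :=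
        sum_le_sum fun a ha => sq_mul_card_le_sum_sq_fiberMean_sub (hmem a ha) hε (hdev a ha)
    _ = ∑ a ∈ I, ∑ x ∈ S a, (fiberMean g' f x - fiberMean g f x) ^ 2 :=
        sum_congr rfl fun a ha => sum_congr rfl fun x hx => by
          rw [fiberMean.eq_1 g, mem_fiber.1 (hsub a ha hx)]
    _ = ∑ x ∈ I.biUnion S, (fiberMean g' f x - fiberMean g f x) ^ 2 := (sum_biUnion hdisj).symm
    _ ≤ ∑ x, (fiberMean g' f x - fiberMean g f x) ^ 2 :=
        sum_le_univ_sum_of_nonneg fun _ => sq_nonneg _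

end Energy

section Equipartition

lemma exists_equipartition_refining_off {V : Type*} {s : Finset V} (Q : Finpartition s) {K : ℕ}
    (hK : 0 < K) (hKs : K ≤ #s) :
    ∃ (R : Finpartition s) (B : Finset V),
      #R.parts = K ∧ (∀ u ∈ R.parts, #u = #s / K ∨ #u = #s / K + 1) ∧
      #B ≤ #Q.parts * (#s / K) ∧ ∀ u ∈ R.parts, (∃ w ∈ Q.parts, u ⊆ w) ∨ u ⊆ B := by
  have hmod : #s % K ≤ K := (Nat.mod_lt _ hK).le
  have hsizes : (K - #s % K) * (#s / K) + #s % K * (#s / K + 1) = #s := by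
    rw [mul_add_one, ← add_assoc, ← add_mul, Nat.sub_add_cancel hmod, Nat.div_add_mod]
  let R := Q.equitabilise hsizes
  let leftover (w : Finset V) : Finset V := w \ {u ∈ R.parts | u ⊆ w}.biUnion id
  refine ⟨R, Q.parts.biUnion leftover, ?_, fun u hu => ?_, ?_, fun u hu => ?_⟩
  · rw [Q.card_parts_equitabilise hsizes (Nat.div_pos hKs hK).ne', Nat.sub_add_cancel hmod]
  · exact Finpartition.card_eq_of_mem_parts_equitabilise hu
  · exact card_biUnion_le_card_mul _ _ _ fun w hw => Q.card_parts_equitabilise_subset_le hsizes hw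
  · by_contra! h
    obtain ⟨v, hvu, hv⟩ := not_subset.1 h.2
    obtain ⟨w, hw, hvw⟩ := Q.exists_mem (R.le hu hvu)
    obtain ⟨u', hu', hvu'⟩ : ∃ u' ∈ {u ∈ R.parts | u ⊆ w}, v ∈ u' := by
      by_contra! hcovered
      exact hv (mem_biUnion.2 ⟨w, hw, mem_sdiff.2 ⟨hvw, by simpa using hcovered⟩⟩)
    obtain ⟨hu'R, hu'w⟩ := mem_filter.1 hu'
    exact h.1 w hw (R.eq_of_mem_parts hu hu'R hvu hvu' ▸ hu'w)

variable {V κ : Type*} [Fintype V]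

/-- The fibers of `c`, listed in the order of their labels, have weakly increasing sizes, and any
two sizes differ by at most one. As there are `t` of them, possibly empty, the latter is stated as
each size being `⌊|V| / t⌋` or `⌊|V| / t⌋ + 1`. -/
def IsSortedEquipartition {t : ℕ} (c : V → Fin t) : Prop :=
  Monotone (fun i => #(fiber c i)) ∧
    ∀ i, #(fiber c i) = Fintype.card V / t ∨ #(fiber c i) = Fintype.card V / t + 1

lemma IsSortedEquipartition.card_fiber_le_add_one {t : ℕ} {c : V → Fin t}
    (hc : IsSortedEquipartition c) (i j : Fin t) : #(fiber c i) ≤ #(fiber c j) + 1 := by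
  have hi := hc.2 i
  have hj := hc.2 j
  lia

lemma IsSortedEquipartition.card_div_le_card_fiber {t : ℕ} {c : V → Fin t}
    (hc : IsSortedEquipartition c) (i : Fin t) : Fintype.card V / t ≤ #(fiber c i) := by
  have hi := hc.2 i
  lia

lemma exists_labelling_monotone_card_fiber (R : Finpartition (univ : Finset V)) :
    ∃ c : V → Fin #R.parts, Monotone (fun i => #(fiber c i)) ∧ ∀ i, fiber c i ∈ R.parts := by
  let e₀ : Fin #R.parts ≃ R.parts := R.parts.equivFin.symm
  let e : Fin #R.parts ≃ R.parts := (Tuple.sort fun i => #(e₀ i).1).trans e₀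
  let c (v : V) : Fin #R.parts := e.symm ⟨R.part v, R.part_mem.2 (mem_univ v)⟩
  have hfiber (i : Fin #R.parts) : fiber c i = (e i).1 := by
    ext v
    rw [mem_fiber, Equiv.symm_apply_eq, Subtype.ext_iff]
    exact R.part_eq_iff_mem (e i).2
  refine ⟨c, ?_, fun i => hfiber i ▸ (e i).2⟩
  simp only [hfiber]
  exact Tuple.monotone_sort fun i => #(e₀ i).1

lemma exists_isSortedEquipartition_factorsThrough_off [Fintype κ] (q : V → κ) {K : ℕ}
    (hK : 0 < K) (hKV : K ≤ Fintype.card V) :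
    ∃ (c : V → Fin K) (B : Finset V), IsSortedEquipartition c ∧
      #B ≤ Fintype.card κ * (Fintype.card V / K) ∧ ∀ v ∉ B, ∀ w, c w = c v → q w = q v := by
  let Q : Finpartition (univ : Finset V) := .ofSetoid (Setoid.ker q)
  have hQ : Q.parts ⊆ univ.image (fiber q) := by
    intro w hw
    obtain ⟨v, -, rfl⟩ := mem_image.1 hw
    exact mem_image.2 ⟨q v, mem_univ _, by ext; simp [Setoid.ker_def, eq_comm]⟩
  have hQcard : #Q.parts ≤ Fintype.card κ := (card_le_card hQ).trans card_image_le
  obtain ⟨R, B, rfl, hsize, hB, hR⟩ := exists_equipartition_refining_off Q hK hKV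
  obtain ⟨c, hmono, hcR⟩ := exists_labelling_monotone_card_fiber R
  refine ⟨c, B, ⟨hmono, fun i => hsize _ (hcR i)⟩, hB.trans (by gcongr; rfl), fun v hv w hwv => ?_⟩
  obtain ⟨u, hu, hsub⟩ := (hR _ (hcR (c v))).resolve_right fun h => hv (h (mem_fiber.2 rfl))
  obtain ⟨a, -, rfl⟩ := mem_image.1 (hQ hu)
  rw [mem_fiber.1 (hsub (mem_fiber.2 hwv)), mem_fiber.1 (hsub (mem_fiber.2 rfl))]

end Equipartition

section Box

variable {ι V α β : Type*} [Fintype ι] [DecidableEq ι]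

/-- The mean of the weighted `ι`-uniform hypergraph `f` over the box `∏ i, A i`. It is `0` for an
empty box. -/
noncomputable def boxDensity (f : (ι → V) → ℝ) (A : ι → Finset V) : ℝ :=
  𝔼 x ∈ Fintype.piFinset A, f x

/-- `ε`-regularity of the weighted `ι`-partite hypergraph that `f` induces on the parts `A i`. -/
def IsBoxRegular (ε : ℝ) (f : (ι → V) → ℝ) (A : ι → Finset V) : Prop :=
  ∀ B : ι → Finset V, (∀ i, B i ⊆ A i) → (∀ i, ε * #(A i) ≤ #(B i)) →
    |boxDensity f B - boxDensity f A| ≤ ε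

lemma pow_card_le_card_piFinset {A : ι → Finset V} {m : ℝ} (hm : 0 ≤ m)
    (hA : ∀ i, m ≤ #(A i)) : m ^ Fintype.card ι ≤ #(Fintype.piFinset A) := by
  rw [Fintype.card_piFinset, Nat.cast_prod, ← card_univ, ← prod_const]
  exact prod_le_prod (fun _ _ => hm) fun i _ => hA i

variable [Fintype V]

lemma fiber_comp (c : V → α) (T : ι → α) :
    fiber (c ∘ · : (ι → V) → ι → α) T = Fintype.piFinset fun i => fiber c (T i) := by
  ext x
  simp [funext_iff]

lemma card_filter_apply_mem (i : ι) (B : Finset V) :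
    #{x : ι → V | x i ∈ B} = #B * Fintype.card V ^ (Fintype.card ι - 1) := by
  have hbox : ({x : ι → V | x i ∈ B} : Finset (ι → V)) =
      Fintype.piFinset (Function.update (fun _ => univ) i B) := by
    ext x
    simp [Function.forall_update_iff (f := fun _ => univ) (p := fun j s => x j ∈ s)]
  simp [hbox, Function.apply_update (fun _ => card), prod_update_of_mem, ← erase_eq]

lemma card_filter_apply_mem_div_card (i : ι) (B : Finset V) :
    (#{x : ι → V | x i ∈ B} : ℝ) / Fintype.card (ι → V) = #B / Fintype.card V := by
  cases isEmpty_or_nonempty V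
  · simp [Subsingleton.elim B ∅]
  have : Nonempty ι := ⟨i⟩
  rw [card_filter_apply_mem, Fintype.card_fun, div_eq_div_iff (by positivity) (by positivity)]
  norm_cast
  rw [mul_assoc, pow_sub_one_mul Fintype.card_ne_zero]

lemma card_filter_exists_apply_mem_div_card_le (B : Finset V) :
    (#{x : ι → V | ∃ i, x i ∈ B} : ℝ) / Fintype.card (ι → V) ≤
      Fintype.card ι * (#B / Fintype.card V) := by
  have hunion : ({x : ι → V | ∃ i, x i ∈ B} : Finset (ι → V)) =
      univ.biUnion fun i => {x | x i ∈ B} := by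
    ext
    simp
  calc (#{x : ι → V | ∃ i, x i ∈ B} : ℝ) / Fintype.card (ι → V)
      ≤ (∑ i, #{x : ι → V | x i ∈ B} : ℕ) / Fintype.card (ι → V) := by
        rw [hunion]
        gcongr
        exact card_biUnion_le
    _ = Fintype.card ι * (#B / Fintype.card V) := by
        simp_rw [Nat.cast_sum, sum_div, card_filter_apply_mem_div_card, sum_const, card_univ,
          nsmul_eq_mul]

lemma energy_comp_le_energy_comp_add {c : V → α} {q : V → β} {B : Finset V}
    (hB : ∀ v ∉ B, ∀ w, c w = c v → q w = q v) {f : (ι → V) → ℝ} (hf : ∀ x, |f x| ≤ 1) :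
    energy (q ∘ ·) f ≤ energy (c ∘ ·) f + Fintype.card ι * (#B / Fintype.card V) := by
  have hbad : ∀ x ∉ ({x : ι → V | ∃ i, x i ∈ B} : Finset (ι → V)), ∀ y : ι → V,
      c ∘ y = c ∘ x → q ∘ y = q ∘ x := by
    intro x hx y hxy
    have hx' : ∀ i, x i ∉ B := by simpa using hx
    exact funext fun i => hB _ (hx' i) _ (congrFun hxy i)
  grw [energy_le_energy_add_card_div hbad hf, card_filter_exists_apply_mem_div_card_le]

/-- The common refinement of the partition into the fibers of `c` and the partitions `{A b, (A b)ᶜ}`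
for all `b`. -/
def cutBy (c : V → α) (A : β → Finset V) (v : V) : α × (β → Prop) := (c v, fun b => v ∈ A b)

variable [Fintype α]

/-- The `ι`-tuples of classes of `c` on which `f` is not `ε`-regular. -/
noncomputable def irregularTuples (ε : ℝ) (f : (ι → V) → ℝ) (c : V → α) : Finset (ι → α) :=
  {T | ¬ IsBoxRegular ε f fun i => fiber c (T i)}

lemma exists_energy_comp_add_le_energy_cutBy [Nonempty V] (f : (ι → V) → ℝ) {ε η : ℝ}
    (hε : 0 ≤ ε) (hη : 0 ≤ η) {c : V → α} (hc : ∀ a, η * Fintype.card V ≤ #(fiber c a)) :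
    ∃ A : (ι → α) × ι → Finset V,
      energy (c ∘ ·) f + #(irregularTuples ε f c) * (ε ^ 2 * (ε * η) ^ Fintype.card ι) ≤
        energy (cutBy c A ∘ ·) f := by
  have hwitness : ∀ T ∈ irregularTuples ε f c, ∃ B : ι → Finset V,
      (∀ i, B i ⊆ fiber c (T i)) ∧ (∀ i, ε * #(fiber c (T i)) ≤ #(B i)) ∧
      ε < |boxDensity f B - boxDensity f fun i => fiber c (T i)| := by
    intro T hT
    simpa [irregularTuples, IsBoxRegular] using hT
  choose! A hsub hlarge hdev using hwitness
  let box (T : ι → α) : Finset (ι → V) := Fintype.piFinset (A T)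
  have hbox : ∀ T ∈ irregularTuples ε f c,
      (ε * η) ^ Fintype.card ι * Fintype.card (ι → V) ≤ #(box T) := by
    intro T hT
    rw [Fintype.card_fun, Nat.cast_pow, ← mul_pow]
    refine pow_card_le_card_piFinset (by positivity) fun i => ?_
    grw [mul_assoc, hc (T i), hlarge T hT i]
  refine ⟨fun p => A p.1 p.2, le_trans ?_ <| energy_add_le_energy_of_le_abs_expect_sub
    (g := (c ∘ ·)) (I := irregularTuples ε f c) (S := box) ?_ hε ?_ ?_ ?_⟩
  · gcongr
    rw [le_div_iff₀ (by positivity), mul_assoc, ← nsmul_eq_mul]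
    refine card_nsmul_le_sum _ _ _ fun T hT => ?_
    grw [mul_assoc, hbox T hT]
  · exact fun x y hxy => funext fun i => congrArg Prod.fst (congrFun hxy i)
  · intro T hT
    rw [fiber_comp]
    exact Fintype.piFinset_subset _ _ (hsub T hT)
  · intro T _ x y hxy
    have hmem (i : ι) : (x i ∈ A T i) = (y i ∈ A T i) :=
      congrFun (congrArg Prod.snd (congrFun hxy i)) (T, i)
    simp only [box, Fintype.mem_piFinset, hmem]
  · intro T hT
    rw [fiber_comp]
    exact (hdev T hT).le

end Box

section WeakRegularity

/-- Half of the energy gained by cutting along the witnesses of irregularity of `δ * t ^ k` tuples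
of classes of an equipartition into `t` parts; the other half absorbs the cost of making the
refinement equitable again. -/
noncomputable def energyGain (k : ℕ) (ε δ : ℝ) : ℝ := δ * (ε ^ 2 * (ε / 2) ^ k) / 2

lemma energyGain_pos (k : ℕ) {ε δ : ℝ} (hε : 0 < ε) (hδ : 0 < δ) : 0 < energyGain k ε δ := by
  unfold energyGain
  positivity

lemma half_div_le_natCast_div {n t : ℕ} (ht : 0 < t) (htn : t ≤ n) :
    (2 * t : ℝ)⁻¹ * n ≤ (n / t : ℕ) := by
  rw [inv_mul_le_iff₀ (by positivity)]
  have hquot : 1 ≤ n / t := Nat.div_pos htn ht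
  have hmod : n % t < t := Nat.mod_lt n ht
  have hn : t * (n / t) + n % t = n := Nat.div_add_mod n t
  have hle : n ≤ 2 * t * (n / t) := by nlinarith
  exact_mod_cast hle

variable {ι : Type*} [Fintype ι] [DecidableEq ι] {ε δ : ℝ}

lemma exists_energy_cutBy_ge {V : Type*} [Fintype V] {f : (ι → V) → ℝ} (hε : 0 ≤ ε) {t : ℕ}
    (ht : 0 < t) (htV : t ≤ Fintype.card V) {c : V → Fin t} (hc : IsSortedEquipartition c)
    (hirr : δ * t ^ Fintype.card ι ≤ #(irregularTuples ε f c)) :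
    ∃ A : (ι → Fin t) × ι → Finset V,
      energy (c ∘ ·) f + 2 * energyGain (Fintype.card ι) ε δ ≤ energy (cutBy c A ∘ ·) f := by
  have : Nonempty V := Fintype.card_pos_iff.1 (ht.trans_le htV)
  have hlarge (i : Fin t) : (2 * t : ℝ)⁻¹ * Fintype.card V ≤ #(fiber c i) :=
    (half_div_le_natCast_div ht htV).trans (by exact_mod_cast hc.card_div_le_card_fiber i)
  obtain ⟨A, hA⟩ := exists_energy_comp_add_le_energy_cutBy f hε (by positivity) hlarge
  refine ⟨A, le_trans (add_le_add le_rfl ?_) hA⟩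
  calc 2 * energyGain (Fintype.card ι) ε δ
      = δ * t ^ Fintype.card ι * (ε ^ 2 * (ε * (2 * t : ℝ)⁻¹) ^ Fintype.card ι) := by
        simp only [energyGain, mul_pow, div_pow, inv_pow]
        field_simp
    _ ≤ #(irregularTuples ε f c) * (ε ^ 2 * (ε * (2 * t : ℝ)⁻¹) ^ Fintype.card ι) := by gcongr

lemma exists_isSortedEquipartition_energy_ge_sub {V κ : Type*} [Fintype V] [Fintype κ]
    (q : V → κ) {f : (ι → V) → ℝ} (hf : ∀ x, |f x| ≤ 1) {K : ℕ} (hK : 0 < K)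
    (hKV : K ≤ Fintype.card V) :
    ∃ r : V → Fin K, IsSortedEquipartition r ∧
      energy (q ∘ ·) f ≤ energy (r ∘ ·) f + Fintype.card ι * Fintype.card κ / K := by
  obtain ⟨r, B, hr, hB, hrq⟩ := exists_isSortedEquipartition_factorsThrough_off q hK hKV
  refine ⟨r, hr, (energy_comp_le_energy_comp_add hrq hf).trans ?_⟩
  have hV : (0 : ℝ) < Fintype.card V := by exact_mod_cast hK.trans_le hKV
  have hBdens : (#B : ℝ) / Fintype.card V ≤ Fintype.card κ / K := by
    rw [div_le_iff₀ hV]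
    calc (#B : ℝ) ≤ Fintype.card κ * (Fintype.card V / K : ℕ) := by exact_mod_cast hB
      _ ≤ Fintype.card κ * (Fintype.card V / K) := by grw [Nat.cast_div_le]
      _ = Fintype.card κ / K * Fintype.card V := by ring
  grw [hBdens, mul_div_assoc]

lemma exists_energy_increment (ι : Type*) [Fintype ι] [DecidableEq ι] (hε : 0 < ε) (hδ : 0 < δ)
    {t : ℕ} (ht : 0 < t) :
    ∃ K, t ≤ K ∧ ∀ (V : Type*) [Fintype V], K ≤ Fintype.card V →
      ∀ f : (ι → V) → ℝ, (∀ x, |f x| ≤ 1) → ∀ c : V → Fin t, IsSortedEquipartition c →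
      δ * t ^ Fintype.card ι ≤ #(irregularTuples ε f c) →
      ∃ r : V → Fin K, IsSortedEquipartition r ∧
        energy (c ∘ ·) f + energyGain (Fintype.card ι) ε δ ≤ energy (r ∘ ·) f := by
  have hgain := energyGain_pos (Fintype.card ι) hε hδ
  let M : ℝ := Fintype.card ι * Fintype.card (Fin t × ((ι → Fin t) × ι → Prop))
  obtain ⟨K₀, hK₀⟩ := exists_nat_ge (M / energyGain (Fintype.card ι) ε δ)
  refine ⟨max t K₀, le_max_left _ _, fun V _ hV f hf c hc hirr => ?_⟩
  have hK : 0 < max t K₀ := lt_max_of_lt_left ht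
  obtain ⟨A, hA⟩ := exists_energy_cutBy_ge hε.le ht ((le_max_left _ _).trans hV) hc hirr
  obtain ⟨r, hr, hloss⟩ := exists_isSortedEquipartition_energy_ge_sub (cutBy c A) hf hK hV
  refine ⟨r, hr, ?_⟩
  have hcost : M / (max t K₀ : ℕ) ≤ energyGain (Fintype.card ι) ε δ := by
    rw [div_le_comm₀ (by exact_mod_cast hK) hgain]
    exact hK₀.trans (by exact_mod_cast le_max_right _ _)
  linarith

lemma exists_regular_or_energy_ge (ι : Type*) [Fintype ι] [DecidableEq ι] (hε : 0 < ε)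
    (hδ : 0 < δ) {t₁ : ℕ} (ht₁ : 0 < t₁) (j : ℕ) :
    ∃ T, t₁ ≤ T ∧ ∀ (V : Type*) [Fintype V], T ≤ Fintype.card V →
      ∀ f : (ι → V) → ℝ, (∀ x, |f x| ≤ 1) →
      (∃ t, t₁ ≤ t ∧ t ≤ T ∧ ∃ c : V → Fin t, IsSortedEquipartition c ∧
        #(irregularTuples ε f c) < δ * t ^ Fintype.card ι) ∨
      ∃ c : V → Fin T, IsSortedEquipartition c ∧
        j * energyGain (Fintype.card ι) ε δ ≤ energy (c ∘ ·) f := by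
  induction j with
  | zero =>
    refine ⟨t₁, le_rfl, fun V _ hV f _ => Or.inr ?_⟩
    obtain ⟨c, -, hc, -⟩ :=
      exists_isSortedEquipartition_factorsThrough_off (fun _ : V => ()) ht₁ hV
    exact ⟨c, hc, by simpa using energy_nonneg _ f⟩
  | succ j ih =>
    obtain ⟨T, hT, ih⟩ := ih
    obtain ⟨K, hTK, hstep⟩ := exists_energy_increment ι hε hδ (ht₁.trans_le hT)
    refine ⟨K, hT.trans hTK, fun V _ hV f hf => ?_⟩
    obtain ⟨t, ht₁t, htT, hreg⟩ | ⟨c, hc, henergy⟩ := ih V (hTK.trans hV) f hf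
    · exact Or.inl ⟨t, ht₁t, htT.trans hTK, hreg⟩
    obtain hreg | hirr := lt_or_ge (#(irregularTuples ε f c) : ℝ) (δ * T ^ Fintype.card ι)
    · exact Or.inl ⟨T, hT, hTK, c, hc, hreg⟩
    · obtain ⟨r, hr, hincr⟩ := hstep V hV f hf c hc hirr
      refine Or.inr ⟨r, hr, ?_⟩
      push_cast
      linarith

theorem stmt_6_general (ι : Type*) [Fintype ι] [DecidableEq ι] (hε : 0 < ε) (hδ : 0 < δ)
    (t₀ : ℕ) :
    ∃ T₀ n₀ : ℕ, ∀ (V : Type*) [Fintype V], n₀ ≤ Fintype.card V →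
      ∀ f : (ι → V) → ℝ, (∀ x, |f x| ≤ 1) →
      ∃ t, t₀ ≤ t ∧ t ≤ T₀ ∧ ∃ c : V → Fin t, IsSortedEquipartition c ∧
        #(irregularTuples ε f c) < δ * t ^ Fintype.card ι := by
  have hgain := energyGain_pos (Fintype.card ι) hε hδ
  obtain ⟨j, hj⟩ := exists_nat_gt (energyGain (Fintype.card ι) ε δ)⁻¹
  obtain ⟨T, hT, h⟩ := exists_regular_or_energy_ge ι hε hδ (lt_max_of_lt_right one_pos) j
  refine ⟨T, T, fun V _ hV f hf => ?_⟩
  obtain ⟨t, ht, htT, hreg⟩ | ⟨c, -, henergy⟩ := h V hV f hf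
  · exact ⟨t, (le_max_left t₀ 1).trans ht, htT, hreg⟩
  · have : Nonempty V := Fintype.card_pos_iff.1 (by lia)
    have hexceeds : 1 < j * energyGain (Fintype.card ι) ε δ :=
      (inv_lt_iff_one_lt_mul₀ hgain).1 hj
    exact absurd (henergy.trans (energy_le_one _ hf)) hexceeds.not_ge

end WeakRegularity

section ThreeGraph

lemma div_pow_div_factorial_le_choose {r n : ℕ} (hrn : r ≤ n) :
    (n / r : ℝ) ^ r / r.factorial ≤ n.choose r := by
  refine le_trans ?_ (Nat.pow_le_choose r n)
  obtain rfl | hr := r.eq_zero_or_pos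
  · simp
  have hbase : (n / r : ℝ) ≤ (n + 1 - r : ℕ) := by
    obtain ⟨s, rfl⟩ := Nat.exists_eq_add_of_le hrn
    rw [div_le_iff₀ (by positivity), show r + s + 1 - r = s + 1 by lia]
    norm_cast
    nlinarith
  gcongr

variable {V : Type} [DecidableEq V]

/-- The indicator function of the ordered triples that span an edge of `H`. -/
noncomputable def edgeIndicator (H : Finset (Finset V)) (x : Fin 3 → V) : ℝ :=
  if {x 0, x 1, x 2} ∈ H then 1 else 0

lemma abs_edgeIndicator_le_one (H : Finset (Finset V)) (x : Fin 3 → V) :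
    |edgeIndicator H x| ≤ 1 := by
  unfold edgeIndicator
  split_ifs <;> simp

lemma eH_eq_sum_edgeIndicator (H : Finset (Finset V)) (A : Fin 3 → Finset V) :
    (eH H (A 0) (A 1) (A 2) : ℝ) = ∑ x ∈ Fintype.piFinset A, edgeIndicator H x := by
  unfold eH edgeIndicator
  rw [← sum_boole]
  refine sum_nbij' (fun x => ![x.1, x.2.1, x.2.2]) (fun x => (x 0, x 1, x 2)) ?_ ?_ ?_ ?_ ?_
  · simp [Fin.forall_fin_succ]
  · simp [Fin.forall_fin_succ]
  · simp
  · simp [funext_iff, Fin.forall_fin_succ]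
  · intro x _
    congr

lemma dH_eq_boxDensity (H : Finset (Finset V)) (A : Fin 3 → Finset V) :
    dH H (A 0) (A 1) (A 2) = boxDensity (edgeIndicator H) A := by
  rw [dH, boxDensity, expect_eq_sum_div_card, eH_eq_sum_edgeIndicator, Fintype.card_piFinset,
    Fin.prod_univ_three]
  push_cast
  rfl

lemma IsBoxRegular.epsRegular {ε : ℝ} {H : Finset (Finset V)} {A : Fin 3 → Finset V}
    (hA : IsBoxRegular ε (edgeIndicator H) A) : EpsRegular ε H (A 0) (A 1) (A 2) := by
  intro B₀ h₀ B₁ h₁ B₂ h₂ hc₀ hc₁ hc₂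
  have hB := hA ![B₀, B₁, B₂] (by simp [Fin.forall_fin_succ, *]) (by simp [Fin.forall_fin_succ, *])
  rwa [← dH_eq_boxDensity, ← dH_eq_boxDensity] at hB

lemma card_increasing_irregular_le [Fintype V] (ε : ℝ) (H : Finset (Finset V)) {t : ℕ}
    (c : V → Fin t) :
    #{x : Fin t × Fin t × Fin t | x.1 < x.2.1 ∧ x.2.1 < x.2.2 ∧
      ¬ EpsRegular ε H (fiber c x.1) (fiber c x.2.1) (fiber c x.2.2)} ≤
      #(irregularTuples ε (edgeIndicator H) c) := by
  refine card_le_card_of_injOn (fun x => ![x.1, x.2.1, x.2.2]) (fun x hx => ?_)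
    fun x _ y _ hxy => ?_
  · rw [mem_coe, mem_filter_univ] at hx
    rw [mem_coe, irregularTuples, mem_filter_univ]
    exact fun hreg => hx.2.2 hreg.epsRegular
  · simpa [Prod.ext_iff] using hxy

end ThreeGraph

/-- Weak regularity lemma for 3-graphs: for all `ε > 0` and `t₀` there are `T₀, n₀` such
that every 3-graph on `n ≥ n₀` vertices admits a partition into `t` classes,
`t₀ ≤ t ≤ T₀`, with sizes differing by at most one, in which all but fewer than
`ε·C(t,3)` triples of classes induce an `ε`-regular 3-partite 3-graph. -/
theorem stmt_6 (ε : ℝ) (hε : 0 < ε) (t₀ : ℕ) :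
    ∃ T₀ n₀ : ℕ, ∀ n : ℕ, n₀ ≤ n →
      ∀ (V : Type) [DecidableEq V] [Fintype V], Fintype.card V = n →
      ∀ H : Finset (Finset V), (∀ e ∈ H, e.card = 3) →
      ∃ t : ℕ, t₀ ≤ t ∧ t ≤ T₀ ∧
      ∃ P : Fin t → Finset V,
        (∀ i j, i ≠ j → Disjoint (P i) (P j)) ∧
        (∀ v : V, ∃ i, v ∈ P i) ∧
        (∀ i j, i ≤ j → (P i).card ≤ (P j).card) ∧
        (∀ i j, (P i).card ≤ (P j).card + 1) ∧
        ((Finset.univ.filter fun x : Fin t × Fin t × Fin t =>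
            x.1 < x.2.1 ∧ x.2.1 < x.2.2 ∧
            ¬ EpsRegular ε H (P x.1) (P x.2.1) (P x.2.2)).card : ℝ) <
          ε * (t.choose 3 : ℝ) := by
  obtain ⟨T₀, n₀, h⟩ := stmt_6_general (Fin 3) hε (δ := ε / 162) (by positivity) (max t₀ 3)
  refine ⟨T₀, n₀, fun n hn V _ _ hV H _ => ?_⟩
  obtain ⟨t, ht, htT, c, hc, hirr⟩ :=
    h V (hV ▸ hn) (edgeIndicator H) (abs_edgeIndicator_le_one H)
  refine ⟨t, (le_max_left _ _).trans ht, htT, fiber c, fun _ _ => disjoint_fiber c,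
    fun v => ⟨c v, mem_fiber.2 rfl⟩, hc.1, hc.card_fiber_le_add_one, ?_⟩
  have hchoose := div_pow_div_factorial_le_choose ((le_max_right _ _).trans ht)
  calc _ ≤ (#(irregularTuples ε (edgeIndicator H) c) : ℝ) := by
        exact_mod_cast card_increasing_irregular_le ε H c
    _ < ε / 162 * t ^ Fintype.card (Fin 3) := hirr
    _ = ε * ((t / (3 : ℕ) : ℝ) ^ 3 / Nat.factorial 3) := by
        norm_num [Nat.factorial]
        ring
    _ ≤ ε * t.choose 3 := by gcongr
end

section
/- Let 0 < α < c < 1 and let H be a 3-graph on n vertices. If δ(H) ≥ c·C(n−1,2), then the graph G_α has minimum degree at least ((c−α)/(1−α))·(n−1). -/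
open Finset
open scoped Classical

/-- The co-degree of a pair of vertices in a 3-graph `H`. -/
def coDeg {V : Type} [DecidableEq V] (H : Finset (Finset V)) (u v : V) : ℕ :=
  (H.filter fun e => u ∈ e ∧ v ∈ e).card

/-!
Fix a vertex `u` of a `k`-graph. The co-degrees of `u` sum to `(k - 1) deg u`, and each of them is
at most `C(n-2, k-2)`; as `(n - 1) C(n-2, k-2) = (k - 1) C(n-1, k-1)`, the degree hypothesis says
that they are on average at least a fraction `c` of their maximum. A reverse Markov inequality then
bounds from below the number of co-degrees that are at least a fraction `α` of the maximum.
-/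

section ReverseMarkov

variable {ι 𝕜 : Type*} [Field 𝕜] [LinearOrder 𝕜] [IsStrictOrderedRing 𝕜]
  {s : Finset ι} {f : ι → 𝕜} {M : 𝕜}

lemma sum_le_card_mul_add_card_filter_mul (hf : ∀ i ∈ s, f i ≤ M) (t : 𝕜) :
    ∑ i ∈ s, f i ≤ #s * t + #{i ∈ s | t ≤ f i} * (M - t) := by
  calc ∑ i ∈ s, f i ≤ ∑ i ∈ s, (t + if t ≤ f i then M - t else 0) := by
        refine sum_le_sum fun i hi => ?_
        split_ifs with hti
        · linarith [hf i hi]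
        · linarith
    _ = #s * t + #{i ∈ s | t ≤ f i} * (M - t) := by
        simp only [sum_add_distrib, ← sum_filter, sum_const, nsmul_eq_mul]

lemma div_mul_card_le_card_filter {α c : 𝕜} (hα : α < 1) (hc : c ≤ 1) (hM : 0 ≤ M)
    (hf : ∀ i ∈ s, f i ≤ M) (hsum : c * (#s * M) ≤ ∑ i ∈ s, f i) :
    (c - α) / (1 - α) * #s ≤ #{i ∈ s | α * M ≤ f i} := by
  have hα' : 0 < 1 - α := sub_pos.2 hα
  rcases hM.eq_or_lt with rfl | hM
  · simp only [mul_zero] at hsum ⊢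
    have hzero : ∀ i ∈ s, f i = 0 :=
      (sum_eq_zero_iff_of_nonpos hf).1 ((sum_nonpos hf).antisymm hsum)
    rw [filter_true_of_mem fun i hi => (hzero i hi).ge]
    exact mul_le_of_le_one_left (Nat.cast_nonneg _) ((div_le_one hα').2 (by linarith))
  · have hupper := sum_le_card_mul_add_card_filter_mul hf (α * M)
    rw [div_mul_eq_mul_div, div_le_iff₀ hα']
    refine le_of_mul_le_mul_right ?_ hM
    linarith

end ReverseMarkov

lemma card_filter_superset_le_choose {V : Type*} [DecidableEq V] [Fintype V]
    {H : Finset (Finset V)} {k : ℕ} (s : Finset V) (hH : ∀ e ∈ H, #e = k + #s) :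
    #{e ∈ H | s ⊆ e} ≤ (Fintype.card V - #s).choose k := by
  rw [← card_compl, ← card_powersetCard]
  refine card_le_card_of_injOn (· \ s) (fun e he => ?_) fun e he e' he' heq => ?_
  · obtain ⟨heH, hse⟩ := mem_filter.1 he
    refine mem_powersetCard.2 ⟨fun v hv => mem_compl.2 (mem_sdiff.1 hv).2, ?_⟩
    rw [card_sdiff_of_subset hse, hH e heH, Nat.add_sub_cancel]
  · rw [← sdiff_union_of_subset (mem_filter.1 he).2, ← sdiff_union_of_subset (mem_filter.1 he').2]
    exact congrArg (· ∪ s) heq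

section CoDegree

variable {V : Type} [DecidableEq V] [Fintype V] {H : Finset (Finset V)} {k : ℕ}

lemma coDeg_le_choose (hH : ∀ e ∈ H, #e = k + 2) {u v : V} (huv : u ≠ v) :
    coDeg H u v ≤ (Fintype.card V - 2).choose k := by
  have hpair : #{u, v} = 2 := card_pair huv
  simpa only [coDeg, insert_subset_iff, singleton_subset_iff, hpair] using
    card_filter_superset_le_choose {u, v} (by rwa [hpair])

lemma sum_coDeg_erase (hH : ∀ e ∈ H, #e = k + 1) (u : V) :
    ∑ v ∈ univ.erase u, coDeg H u v = #{e ∈ H | u ∈ e} * k := by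
  calc ∑ v ∈ univ.erase u, coDeg H u v
      = ∑ v ∈ univ.erase u, #{e ∈ {e ∈ H | u ∈ e} | v ∈ e} := by
        simp only [coDeg, filter_filter]
    _ = ∑ e ∈ H with u ∈ e, #{v ∈ univ.erase u | v ∈ e} :=
        sum_card_bipartiteAbove_eq_sum_card_bipartiteBelow (· ∈ ·)
    _ = #{e ∈ H | u ∈ e} * k := sum_const_nat fun e he => by
        obtain ⟨heH, hue⟩ := mem_filter.1 he
        rw [filter_mem_eq_inter, erase_inter, univ_inter, card_erase_of_mem hue, hH e heH,
          Nat.add_sub_cancel]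

end CoDegree

lemma mul_choose_sub_one (n k : ℕ) :
    n * (n - 1).choose k = n.choose (k + 1) * (k + 1) := by
  cases n with
  | zero => simp
  | succ n => exact Nat.add_one_mul_choose_eq n k

theorem stmt_7_general {α c : ℝ} (hα : α < 1) (hc : c ≤ 1) {V : Type} [DecidableEq V] [Fintype V]
    {H : Finset (Finset V)} {k : ℕ} (hH : ∀ e ∈ H, #e = k + 2) (u : V)
    (hdeg : c * ((Fintype.card V - 1).choose (k + 1) : ℕ) ≤ #{e ∈ H | u ∈ e}) :
    (c - α) / (1 - α) * ((Fintype.card V : ℝ) - 1) ≤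
      #{v | v ≠ u ∧ α * ((Fintype.card V - 2).choose k : ℕ) ≤ (coDeg H u v : ℝ)} := by
  have hcard : #(univ.erase u) = Fintype.card V - 1 := card_erase_of_mem (mem_univ u)
  have hcoDeg : ∀ v ∈ univ.erase u, (coDeg H u v : ℝ) ≤ ((Fintype.card V - 2).choose k : ℕ) :=
    fun v hv => Nat.cast_le.2 (coDeg_le_choose hH (ne_of_mem_erase hv).symm)
  have hchoose : (Fintype.card V - 1) * (Fintype.card V - 2).choose k =
      (Fintype.card V - 1).choose (k + 1) * (k + 1) := mul_choose_sub_one _ k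
  have hsum : c * (#(univ.erase u) * ((Fintype.card V - 2).choose k : ℕ)) ≤
      ∑ v ∈ univ.erase u, (coDeg H u v : ℝ) := by
    rw [hcard, ← Nat.cast_sum, sum_coDeg_erase hH, ← Nat.cast_mul, hchoose, Nat.cast_mul,
      Nat.cast_mul, ← mul_assoc]
    exact mul_le_mul_of_nonneg_right hdeg (Nat.cast_nonneg _)
  have hmarkov := div_mul_card_le_card_filter hα hc (Nat.cast_nonneg _) hcoDeg hsum
  rwa [hcard, Nat.cast_pred (Fintype.card_pos_iff.2 ⟨u⟩), ← filter_ne', filter_filter] at hmarkov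

/-- If `0 < α < c < 1` and the 3-graph `H` on `n` vertices has minimum vertex degree at
least `c·C(n-1,2)`, then in the graph `G_α` of `α`-large pairs every vertex has degree at
least `((c-α)/(1-α))·(n-1)`. -/
theorem stmt_7 (α c : ℝ) (h0 : 0 < α) (hαc : α < c) (hc : c < 1)
    (V : Type) [DecidableEq V] [Fintype V]
    (H : Finset (Finset V)) (hH : ∀ e ∈ H, e.card = 3)
    (hδ : ∀ v : V, c * (((Fintype.card V - 1).choose 2 : ℕ) : ℝ) ≤
      ((H.filter fun e => v ∈ e).card : ℝ)) :
    ∀ u : V, (c - α) / (1 - α) * ((Fintype.card V : ℝ) - 1) ≤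
      ((Finset.univ.filter fun v =>
        v ≠ u ∧ α * ((Fintype.card V : ℝ) - 2) ≤ (coDeg H u v : ℝ)).card : ℝ) := by
  intro u
  convert stmt_7_general (k := 1) (hαc.trans hc) hc.le hH u (hδ u) using 4 with v
  refine and_congr_right fun hvu => ?_
  rw [Nat.choose_one_right, Nat.cast_sub (Fintype.one_lt_card_iff.2 ⟨v, u, hvu⟩), Nat.cast_two]
end

section
/- There exists n_0 such that for all n ≥ n_0 the following holds. Let H be a 3-graph on n vertices with δ(H) ≥ 0.799·C(n−1,2). Then for all pairs e = {u_0, u_1} ∈ G_{0.33} and f = {v_0, v_1} ∈ G_{0.33} with e ∩ f = ∅, there exists a tight path in H of length 12 connecting the endpairs (u_0, u_1) and (v_0, v_1). -/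
open Finset
open scoped Classical

/-- A tight path in a 3-graph `H`: a sequence of distinct vertices in which every three
consecutive vertices form an edge of `H`. -/
def IsTightPath {V : Type} [DecidableEq V] {t : ℕ} (H : Finset (Finset V))
    (w : Fin t → V) : Prop :=
  Function.Injective w ∧
    ∀ (i : ℕ) (hi : i + 2 < t),
      ({w ⟨i, by omega⟩, w ⟨i + 1, by omega⟩, w ⟨i + 2, by omega⟩} : Finset V) ∈ H

/-!
Let `n` be the number of vertices. Every link graph has about `0.799 n² / 2` edges or more. In
such a graph two vertex sets whose cross pairs number well above `0.201 n²` span quadratically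
many edges, so from a vertex of degree at least `0.32 n` there are `Ω(n²)` walks of length three
to each of `0.7 n` vertices. As `0.7² + 2 · 0.799 > 2`, the links of two vertices `a` and `z`
share `Ω(n²)` edges between the sets reached in this way, and `Ω(n⁶)` sextuples `w` form a walk
`u₁, w 0, w 1, w 2, w 3` in the link of `a` and a walk `w 2, w 3, w 4, w 5, v₁` in the link of
`z`.

There are linearly many suitable `a` completing `{u₀, u₁}` to an edge, and `z` completing
`{v₀, v₁}`. By the pigeonhole principle two of boundedly many disjoint pairs `(a, z)` and
`(a', z')` share a sextuple `w` of distinct new vertices, and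
`u₀, u₁, a, w 0, w 1, a', w 2, w 3, z', w 4, w 5, z, v₁, v₀` is a tight path.
-/

section CrossDensity

/-- The least proportion of ordered pairs covered by `X ×ˢ Y ∪ Y ×ˢ X`, where `X` and `Y` contain
proportions `β` and `γ` of the vertices; it is attained when `X` and `Y` are nested. -/
def crossDensity (β γ : ℝ) : ℝ := 2 * β * γ - min β γ ^ 2

lemma crossDensity_mono {β γ x y : ℝ} (hβ : 0 ≤ β) (hγ : 0 ≤ γ) (hx : β ≤ x) (hy : γ ≤ y) :
    crossDensity β γ ≤ crossDensity x y := by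
  unfold crossDensity
  rcases le_total β γ with hβγ | hβγ <;> rcases le_total x y with hxy | hxy <;>
    simp only [min_eq_left, min_eq_right, hβγ, hxy]
  · nlinarith
  · nlinarith
  · nlinarith
  · nlinarith

lemma crossDensity_mul {n : ℝ} (hn : 0 ≤ n) (β γ : ℝ) :
    crossDensity (β * n) (γ * n) = crossDensity β γ * n ^ 2 := by
  rw [crossDensity, crossDensity, ← min_mul_of_nonneg _ _ hn]
  ring

lemma crossDensity_card_le {V : Type*} [DecidableEq V] (X Y : Finset V) :
    crossDensity #X #Y ≤ 2 * #X * #Y - (#(X ∩ Y) : ℝ) ^ 2 := by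
  have h_inter : (#(X ∩ Y) : ℝ) ≤ min (#X : ℝ) #Y :=
    le_min (mod_cast card_le_card inter_subset_left) (mod_cast card_le_card inter_subset_right)
  unfold crossDensity
  gcongr

end CrossDensity

section Graph

variable {V : Type*} (G : SimpleGraph V) [DecidableRel G.Adj]

lemma card_interedges_comm (X Y : Finset V) : #(G.interedges X Y) = #(G.interedges Y X) :=
  have := G.symm
  Rel.card_interedges_comm X Y

lemma card_interedges_eq_sum (X Y : Finset V) :
    #(G.interedges X Y) = ∑ y ∈ Y, #{x ∈ X | G.Adj x y} := by
  simp only [SimpleGraph.interedges_def, card_filter, sum_product_right]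

variable [Fintype V]

lemma two_mul_card_edgeFinset_eq_card_interedges_univ :
    2 * #G.edgeFinset = #(G.interedges univ univ) := by
  rw [G.two_mul_card_edgeFinset, G.interedges_def, univ_product_univ]

lemma card_mul_card_add_card_edgeFinset_le [DecidableEq V] (X Y : Finset V) :
    2 * #X * #Y + 2 * #G.edgeFinset ≤
      Fintype.card V ^ 2 + #(X ∩ Y) ^ 2 + 2 * #(G.interedges X Y) := by
  rw [two_mul_card_edgeFinset_eq_card_interedges_univ]
  set cross := X ×ˢ Y ∪ Y ×ˢ X
  set darts := G.interedges univ univ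
  have h_cross : #cross + #(X ∩ Y) ^ 2 = 2 * #X * #Y := by
    have h := card_union_add_card_inter (X ×ˢ Y) (Y ×ˢ X)
    rw [product_inter_product, inter_comm Y X, card_product, card_product, card_product] at h
    linarith
  have h_union : #(cross ∪ darts) ≤ Fintype.card V ^ 2 := by
    rw [sq, ← Fintype.card_prod]
    exact card_le_univ _
  have h_inter : #(cross ∩ darts) ≤ 2 * #(G.interedges X Y) := by
    have h_subset : cross ∩ darts ⊆ G.interedges X Y ∪ G.interedges Y X := by
      intro p
      simp only [cross, darts, mem_inter, mem_union, mem_product, SimpleGraph.mem_interedges_iff]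
      tauto
    calc #(cross ∩ darts) ≤ #(G.interedges X Y) + #(G.interedges Y X) :=
          (card_le_card h_subset).trans (card_union_le _ _)
      _ = 2 * #(G.interedges X Y) := by
          rw [card_interedges_comm G Y X, two_mul]
  have h_incl_excl := card_union_add_card_inter cross darts
  omega

/-- The vertices of `G` with at least `t` neighbours in `X`. -/
noncomputable def richVertices (X : Finset V) (t : ℝ) : Finset V :=
  {v | t ≤ #{x ∈ X | G.Adj x v}}

variable {G}

lemma mem_richVertices {X : Finset V} {t : ℝ} {v : V} :
    v ∈ richVertices G X t ↔ t ≤ #{x ∈ X | G.Adj x v} := by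
  simp [richVertices]

lemma mul_card_le_card_interedges {X Y : Finset V} {t : ℝ} (hY : Y ⊆ richVertices G X t) :
    t * #Y ≤ #(G.interedges X Y) := by
  rw [card_interedges_eq_sum, Nat.cast_sum, mul_comm, ← nsmul_eq_mul]
  exact card_nsmul_le_sum _ _ _ fun y hy => mem_richVertices.1 (hY hy)

lemma card_interedges_compl_richVertices_le [DecidableEq V] (X : Finset V) (t : ℝ) :
    (#(G.interedges X (richVertices G X t)ᶜ) : ℝ) ≤ t * #(richVertices G X t)ᶜ := by
  rw [card_interedges_eq_sum, Nat.cast_sum, mul_comm, ← nsmul_eq_mul]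
  refine sum_le_card_nsmul _ _ _ fun y hy => ?_
  rw [mem_compl, mem_richVertices, not_le] at hy
  exact hy.le

lemma one_sub_mul_card_le_card_richVertices {β γ ρ τ : ℝ} (hβ : 0 ≤ β) (hγ : 0 ≤ γ) (hτ : 0 ≤ τ)
    (hρ : ρ * Fintype.card V ^ 2 ≤ 2 * #G.edgeFinset) {X : Finset V}
    (hX : β * Fintype.card V ≤ #X) (h : 1 - ρ + 2 * τ < crossDensity β γ) :
    (1 - γ) * Fintype.card V ≤ #(richVertices G X (τ * Fintype.card V)) := by
  classical
  set n := Fintype.card V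
  set poor := (richVertices G X (τ * n))ᶜ
  have h_poor_le : (#poor : ℝ) ≤ n := mod_cast card_le_univ poor
  have h_card : (#(richVertices G X (τ * n)) : ℝ) + #poor = n :=
    mod_cast card_add_card_compl (richVertices G X (τ * n))
  have hn : (0 : ℝ) ≤ n := Nat.cast_nonneg _
  by_contra! h_few
  have h_edges : (#(G.interedges X poor) : ℝ) ≤ τ * n ^ 2 :=
    calc (#(G.interedges X poor) : ℝ) ≤ τ * n * #poor := card_interedges_compl_richVertices_le X _
      _ ≤ τ * n * n := by gcongr
      _ = τ * n ^ 2 := by ring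
  have h_count : 2 * (#X : ℝ) * #poor + 2 * #G.edgeFinset ≤
      n ^ 2 + (#(X ∩ poor) : ℝ) ^ 2 + 2 * #(G.interedges X poor) :=
    mod_cast card_mul_card_add_card_edgeFinset_le G X poor
  have h_cross : crossDensity β γ * n ^ 2 ≤ (1 - ρ + 2 * τ) * n ^ 2 :=
    calc crossDensity β γ * n ^ 2 = crossDensity (β * n) (γ * n) := (crossDensity_mul hn β γ).symm
      _ ≤ crossDensity #X #poor :=
          crossDensity_mono (by positivity) (by positivity) hX (by linarith)
      _ ≤ 2 * #X * #poor - (#(X ∩ poor) : ℝ) ^ 2 := crossDensity_card_le X poor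
      _ ≤ (1 - ρ + 2 * τ) * n ^ 2 := by linarith
  have hn_pos : (0 : ℝ) < n := by nlinarith
  exact absurd h_cross (not_le.2 (by gcongr))

variable (G) in
/-- The pairs `(b, c)` such that `u, b, c, d` is a walk in `G`. -/
def threeWalks (u d : V) : Finset (V × V) :=
  {p | G.Adj u p.1 ∧ G.Adj p.1 p.2 ∧ G.Adj p.2 d}

lemma sq_le_card_threeWalks {u d : V} {t : ℝ} (ht : 0 ≤ t)
    (hd : d ∈ richVertices G (richVertices G (G.neighborFinset u) t) t) :
    t ^ 2 ≤ #(threeWalks G u d) := by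
  set middle : Finset V := {c ∈ richVertices G (G.neighborFinset u) t | G.Adj c d}
  have h_subset : G.interedges (G.neighborFinset u) middle ⊆ threeWalks G u d := by
    intro p
    simp only [middle, threeWalks, SimpleGraph.mem_interedges_iff, SimpleGraph.mem_neighborFinset,
      mem_filter, mem_univ, true_and]
    tauto
  calc t ^ 2 = t * t := sq t
    _ ≤ t * #middle := by
        gcongr
        exact mem_richVertices.1 hd
    _ ≤ #(G.interedges (G.neighborFinset u) middle) :=
        mul_card_le_card_interedges (filter_subset _ _)
    _ ≤ #(threeWalks G u d) := mod_cast card_le_card h_subset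

lemma one_sub_mul_card_le_card_filter_card_threeWalks {β γ δ ρ τ : ℝ} (hβ : 0 ≤ β) (hγ : 0 ≤ γ)
    (hγ_le : γ ≤ 1) (hδ : 0 ≤ δ) (hτ : 0 ≤ τ) (hρ : ρ * Fintype.card V ^ 2 ≤ 2 * #G.edgeFinset)
    {u : V} (hu : β * Fintype.card V ≤ G.degree u) (hβγ : 1 - ρ + 2 * τ < crossDensity β γ)
    (hγδ : 1 - ρ + 2 * τ < crossDensity (1 - γ) δ) :
    (1 - δ) * Fintype.card V ≤ #{d | (τ * Fintype.card V) ^ 2 ≤ (#(threeWalks G u d) : ℝ)} := by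
  have h_second := one_sub_mul_card_le_card_richVertices hβ hγ hτ hρ
    (X := G.neighborFinset u) hu hβγ
  have h_third := one_sub_mul_card_le_card_richVertices (sub_nonneg.2 hγ_le) hδ hτ hρ h_second hγδ
  refine h_third.trans (mod_cast card_le_card fun d hd => ?_)
  exact mem_filter.2 ⟨mem_univ _, sq_le_card_threeWalks (by positivity) hd⟩

lemma sub_mul_card_le_mul_card_filter_le_degree {β ρ : ℝ}
    (hρ : ρ * Fintype.card V ^ 2 ≤ 2 * #G.edgeFinset) :
    (ρ - β) * Fintype.card V ≤ (1 - β) * #{v | β * Fintype.card V ≤ (G.degree v : ℝ)} := by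
  set n := Fintype.card V
  set large : Finset V := {v | β * n ≤ (G.degree v : ℝ)}
  have h_sum : ρ * n ^ 2 ≤ ∑ v, (G.degree v : ℝ) := by
    rw [← Nat.cast_sum, G.sum_degrees_eq_twice_card_edges]
    exact_mod_cast hρ
  have h_degree_le : ∀ v, (G.degree v : ℝ) ≤ β * n + if v ∈ large then (1 - β) * n else 0 := by
    intro v
    split_ifs with hv
    · have : (G.degree v : ℝ) ≤ n := mod_cast (G.degree_lt_card_verts v).le
      linarith
    · simp only [large, mem_filter, mem_univ, true_and, not_le] at hv
      linarith
  have h_total : ρ * n ^ 2 ≤ β * n ^ 2 + (1 - β) * n * #large :=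
    calc ρ * n ^ 2 ≤ ∑ v, (β * n + if v ∈ large then (1 - β) * n else 0) :=
          h_sum.trans (sum_le_sum fun v _ => h_degree_le v)
      _ = β * n ^ 2 + (1 - β) * n * #large := by
          simp only [sum_add_distrib, sum_const, sum_ite_mem, univ_inter, card_univ, nsmul_eq_mul]
          ring
  rcases (Nat.cast_nonneg n : (0 : ℝ) ≤ n).eq_or_lt with hn | hn
  · have : (#large : ℝ) ≤ n := mod_cast card_le_univ large
    have : (#large : ℝ) = 0 := le_antisymm (hn ▸ this) (Nat.cast_nonneg _)
    rw [← hn, this, mul_zero, mul_zero]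
  · refine le_of_mul_le_mul_right ?_ hn
    linarith

lemma degree_add_card_filter_le_degree_le (u : V) (t : ℝ) :
    G.degree u + #{v | t ≤ (G.degree v : ℝ)} ≤
      Fintype.card V + #{v ∈ G.neighborFinset u | t ≤ (G.degree v : ℝ)} := by
  rw [← G.card_neighborFinset_eq_degree, ← card_union_add_card_inter,
    inter_filter, inter_univ]
  gcongr
  exact card_le_univ _

lemma sub_mul_card_add_mul_degree_le {β ρ : ℝ} (hβ : β ≤ 1)
    (hρ : ρ * Fintype.card V ^ 2 ≤ 2 * #G.edgeFinset) (u : V) :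
    (ρ - β) * Fintype.card V + (1 - β) * G.degree u ≤ (1 - β) *
      (Fintype.card V + #{v ∈ G.neighborFinset u | β * Fintype.card V ≤ (G.degree v : ℝ)}) := by
  set n := Fintype.card V
  have h_inter : (G.degree u : ℝ) + #{v | β * n ≤ (G.degree v : ℝ)} ≤
      n + #{v ∈ G.neighborFinset u | β * n ≤ (G.degree v : ℝ)} :=
    mod_cast degree_add_card_filter_le_degree_le u _
  calc (ρ - β) * n + (1 - β) * G.degree u
      ≤ (1 - β) * (G.degree u + #{v | β * n ≤ (G.degree v : ℝ)}) := by
        linarith [sub_mul_card_le_mul_card_filter_le_degree (β := β) hρ]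
    _ ≤ (1 - β) * (n + #{v ∈ G.neighborFinset u | β * n ≤ (G.degree v : ℝ)}) :=
        mul_le_mul_of_nonneg_left h_inter (sub_nonneg.2 hβ)

variable {G' : SimpleGraph V} [DecidableRel G'.Adj]

lemma card_mul_card_add_card_edgeFinset_add_le_card_interedges_inf (D E : Finset V) :
    #D * #E + 2 * #G.edgeFinset + 2 * #G'.edgeFinset ≤
      2 * Fintype.card V ^ 2 + #((G ⊓ G').interedges D E) := by
  have h_le (S : Finset (V × V)) : #S ≤ Fintype.card V ^ 2 := by
    rw [sq, ← Fintype.card_prod]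
    exact card_le_univ S
  set darts := G.interedges univ univ
  set darts' := G'.interedges univ univ
  have h_darts := card_union_add_card_inter darts darts'
  have h_product := card_union_add_card_inter (D ×ˢ E) (darts ∩ darts')
  have h_eq : (G ⊓ G').interedges D E = D ×ˢ E ∩ (darts ∩ darts') := by
    ext p
    simp [darts, darts', SimpleGraph.mem_interedges_iff, and_assoc]
  rw [h_eq, two_mul_card_edgeFinset_eq_card_interedges_univ,
    two_mul_card_edgeFinset_eq_card_interedges_univ, ← card_product]
  linarith [h_le (darts ∪ darts'), h_le (D ×ˢ E ∪ darts ∩ darts')]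

/-- The sextuples `w` such that `u, w 0, w 1, w 2, w 3` is a walk in `G` and
`w 2, w 3, w 4, w 5, v` is a walk in `G'`. For `G` and `G'` the links of `a` and `z` these are the
interior vertices of the connecting paths. -/
def linkedWalks (G G' : SimpleGraph V) [DecidableRel G.Adj] [DecidableRel G'.Adj] (u v : V) :
    Finset (Fin 6 → V) :=
  {w | (G.Adj u (w 0) ∧ G.Adj (w 0) (w 1) ∧ G.Adj (w 1) (w 2) ∧ G.Adj (w 2) (w 3)) ∧
    G'.Adj (w 2) (w 3) ∧ G'.Adj (w 3) (w 4) ∧ G'.Adj (w 4) (w 5) ∧ G'.Adj (w 5) v}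

lemma sum_card_threeWalks_mul_le_card_linkedWalks (u v : V) (D E : Finset V) :
    ∑ p ∈ (G ⊓ G').interedges D E, #(threeWalks G u p.1) * #(threeWalks G' v p.2) ≤
      #(linkedWalks G G' u v) := by
  simp only [← card_product]
  rw [← card_sigma]
  refine card_le_card_of_injOn
    (fun q => ![q.2.1.1, q.2.1.2, q.1.1, q.1.2, q.2.2.2, q.2.2.1]) ?_ ?_
  · rintro ⟨⟨d, e⟩, ⟨b, c⟩, ⟨g, f⟩⟩ hq
    simp only [coe_sigma, Set.mem_sigma_iff, mem_coe, SimpleGraph.mem_interedges_iff,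
      SimpleGraph.inf_adj, mem_product, threeWalks, mem_filter, mem_univ, true_and] at hq
    obtain ⟨⟨-, -, hde, hde'⟩, ⟨hub, hbc, hcd⟩, hvg, hgf, hfe⟩ := hq
    simpa [linkedWalks] using
      ⟨⟨hub, hbc, hcd, hde⟩, hde', hfe.symm, hgf.symm, hvg.symm⟩
  · rintro ⟨⟨d, e⟩, ⟨b, c⟩, ⟨g, f⟩⟩ - ⟨⟨d', e'⟩, ⟨b', c'⟩, ⟨g', f'⟩⟩ - h
    simp_all

lemma mul_mul_le_card_linkedWalks {u v : V} {D E : Finset V} {s : ℝ} (hs : 0 ≤ s)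
    (hD : ∀ d ∈ D, s ≤ #(threeWalks G u d)) (hE : ∀ e ∈ E, s ≤ #(threeWalks G' v e)) :
    #((G ⊓ G').interedges D E) * (s * s) ≤ #(linkedWalks G G' u v) := by
  refine le_trans ?_ (Nat.cast_le.2 (sum_card_threeWalks_mul_le_card_linkedWalks u v D E))
  rw [← nsmul_eq_mul, Nat.cast_sum]
  refine card_nsmul_le_sum _ _ _ fun p hp => ?_
  rw [SimpleGraph.mem_interedges_iff] at hp
  rw [Nat.cast_mul]
  gcongr
  · exact hD _ hp.1
  · exact hE _ hp.2.1

lemma mul_pow_six_le_card_linkedWalks {β γ δ ρ τ : ℝ} (hβ : 0 ≤ β) (hγ : 0 ≤ γ) (hγ_le : γ ≤ 1)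
    (hδ : 0 ≤ δ) (hδ_le : δ ≤ 1) (hτ : 0 ≤ τ)
    (hβγ : 1 - ρ + 2 * τ < crossDensity β γ) (hγδ : 1 - ρ + 2 * τ < crossDensity (1 - γ) δ)
    (hG : ρ * Fintype.card V ^ 2 ≤ 2 * #G.edgeFinset)
    (hG' : ρ * Fintype.card V ^ 2 ≤ 2 * #G'.edgeFinset) {u v : V}
    (hu : β * Fintype.card V ≤ G.degree u) (hv : β * Fintype.card V ≤ G'.degree v) :
    ((1 - δ) ^ 2 - 2 * (1 - ρ)) * τ ^ 4 * Fintype.card V ^ 6 ≤ #(linkedWalks G G' u v) := by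
  set n := Fintype.card V
  set D : Finset V := {d | (τ * n) ^ 2 ≤ (#(threeWalks G u d) : ℝ)}
  set E : Finset V := {e | (τ * n) ^ 2 ≤ (#(threeWalks G' v e) : ℝ)}
  have hD : (1 - δ) * n ≤ #D := one_sub_mul_card_le_card_filter_card_threeWalks
    hβ hγ hγ_le hδ hτ hG hu hβγ hγδ
  have hE : (1 - δ) * n ≤ #E := one_sub_mul_card_le_card_filter_card_threeWalks
    hβ hγ hγ_le hδ hτ hG' hv hβγ hγδ
  have h_count : (#D : ℝ) * #E + 2 * #G.edgeFinset + 2 * #G'.edgeFinset ≤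
      2 * n ^ 2 + #((G ⊓ G').interedges D E) :=
    mod_cast card_mul_card_add_card_edgeFinset_add_le_card_interedges_inf D E
  have h_product : (1 - δ) * n * ((1 - δ) * n) ≤ #D * #E :=
    mul_le_mul hD hE (mul_nonneg (sub_nonneg.2 hδ_le) n.cast_nonneg) (Nat.cast_nonneg _)
  have h_common : ((1 - δ) ^ 2 - 2 * (1 - ρ)) * n ^ 2 ≤ #((G ⊓ G').interedges D E) := by
    linarith
  calc ((1 - δ) ^ 2 - 2 * (1 - ρ)) * τ ^ 4 * n ^ 6
      = ((1 - δ) ^ 2 - 2 * (1 - ρ)) * n ^ 2 * ((τ * n) ^ 2 * (τ * n) ^ 2) := by ring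
    _ ≤ #((G ⊓ G').interedges D E) * ((τ * n) ^ 2 * (τ * n) ^ 2) := by gcongr
    _ ≤ #(linkedWalks G G' u v) :=
        mul_mul_le_card_linkedWalks (by positivity) (fun d hd => (mem_filter.1 hd).2)
          fun e he => (mem_filter.1 he).2

end Graph

section Selection

lemma exists_ne_exists_mem_of_card_lt_sum_card {ι α : Type*} [Fintype ι] [Fintype α]
    {S : ι → Finset α} (h : Fintype.card α < ∑ i, #(S i)) :
    ∃ i j, i ≠ j ∧ ∃ x, x ∈ S i ∧ x ∈ S j := by
  classical
  by_contra! h_disjoint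
  have h_card : #(univ.biUnion S) = ∑ i, #(S i) :=
    card_biUnion fun i _ j _ hij => disjoint_left.2 (h_disjoint i j hij)
  exact absurd (card_le_univ (univ.biUnion S)) (by omega)

lemma exists_embedding_avoiding {V : Type*} {K : ℕ} {A F : Finset V} (h : K + #F ≤ #A) :
    ∃ a : Fin K ↪ V, ∀ i, a i ∈ A ∧ a i ∉ F := by
  classical
  have h_card : Fintype.card (Fin K) ≤ Fintype.card ↥(A \ F) := by
    have := le_card_sdiff F A
    rw [Fintype.card_fin, Fintype.card_coe]
    omega
  obtain ⟨f⟩ := Function.Embedding.nonempty_of_card_le h_card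
  exact ⟨f.trans (Function.Embedding.subtype _), fun i => mem_sdiff.1 (f i).2⟩

lemma exists_disjoint_embeddings_avoiding {V : Type*} {K : ℕ} {A Z F : Finset V}
    (hA : K + #F ≤ #A) (hZ : 2 * K + #F ≤ #Z) :
    ∃ a z : Fin K ↪ V, (∀ i, a i ∈ A ∧ a i ∉ F) ∧ (∀ i, z i ∈ Z ∧ z i ∉ F) ∧
      ∀ i j, a i ≠ z j := by
  classical
  obtain ⟨a, ha⟩ := exists_embedding_avoiding hA
  have h_card : #(F ∪ univ.map a) ≤ #F + K :=
    (card_union_le _ _).trans_eq (by rw [card_map, card_univ, Fintype.card_fin])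
  obtain ⟨z, hz⟩ := exists_embedding_avoiding (K := K) (A := Z) (F := F ∪ univ.map a) (by omega)
  simp only [mem_union, mem_map, mem_univ, true_and, not_or, not_exists] at hz
  exact ⟨a, z, ha, fun i => ⟨(hz i).1, (hz i).2.1⟩, fun i j => (hz j).2.2 i⟩

end Selection

section Tuples

variable {V : Type*} [Fintype V]

lemma pow_le_card_filter_injective_avoiding (k : ℕ) (F : Finset V) :
    (Fintype.card V - (#F + k)) ^ k ≤
      #{w : Fin k → V | Function.Injective w ∧ ∀ i, w i ∉ F} := by
  have h_embeddings : Fintype.card (Fin k ↪ {x // x ∉ F}) =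
      (Fintype.card V - #F).descFactorial k := by
    rw [Fintype.card_embedding_eq, Fintype.card_fin, Fintype.card_subtype_compl, Fintype.card_coe]
  calc (Fintype.card V - (#F + k)) ^ k ≤ (Fintype.card V - #F + 1 - k) ^ k :=
        Nat.pow_le_pow_left (by omega) k
    _ ≤ Fintype.card (Fin k ↪ {x // x ∉ F}) :=
        h_embeddings ▸ Nat.pow_sub_le_descFactorial _ _
    _ ≤ #{w : Fin k → V | Function.Injective w ∧ ∀ i, w i ∉ F} := by
        refine card_le_card_of_injOn (fun f i => (f i : V)) ?_ ?_
        · intro f _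
          simpa using ⟨Subtype.val_injective.comp f.injective, fun i => (f i).2⟩
        · intro f _ g _ h
          ext i
          exact congrFun h i

lemma one_sub_mul_pow_le_card_filter_injective_avoiding {k : ℕ} {F : Finset V} {ε : ℝ}
    (hε_le : ε ≤ 1) (hV : 0 < Fintype.card V) (hF : k * (#F + k) ≤ ε * Fintype.card V) :
    (1 - ε) * (Fintype.card V : ℝ) ^ k ≤
      #{w : Fin k → V | Function.Injective w ∧ ∀ i, w i ∉ F} := by
  set n := Fintype.card V
  set m := #F + k
  have hn : (0 : ℝ) < n := mod_cast hV
  have hm : (m : ℝ) ≤ n := by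
    rcases Nat.eq_zero_or_pos k with rfl | hk
    · exact mod_cast card_le_univ F
    · calc (m : ℝ) ≤ k * m := le_mul_of_one_le_left (Nat.cast_nonneg m) (mod_cast hk)
        _ ≤ ε * n := mod_cast hF
        _ ≤ n := mul_le_of_le_one_left hn.le hε_le
  have h_bernoulli : 1 - ε ≤ (1 - m / n) ^ k :=
    calc 1 - ε ≤ 1 + k * (-(m / n) : ℝ) := by
          have : k * (m / n : ℝ) ≤ ε := by
            rw [← mul_div_assoc, div_le_iff₀ hn]
            exact mod_cast hF
          linarith
      _ ≤ (1 - m / n) ^ k := by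
          refine one_add_mul_le_pow ?_ k
          linarith [(div_le_one hn).2 hm]
  calc (1 - ε) * n ^ k ≤ (1 - m / n) ^ k * n ^ k := by gcongr
    _ = (n - m) ^ k := by
        rw [← mul_pow, sub_mul, one_mul, div_mul_cancel₀ _ hn.ne']
    _ = ((Fintype.card V - m) ^ k : ℕ) := by
        rw [Nat.cast_pow, Nat.cast_sub (mod_cast hm)]
    _ ≤ #{w : Fin k → V | Function.Injective w ∧ ∀ i, w i ∉ F} :=
        mod_cast pow_le_card_filter_injective_avoiding k F

lemma exists_ne_exists_injective_avoiding_mem {ι : Type*} [Fintype ι] {k : ℕ} {F : Finset V}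
    {S : ι → Finset (Fin k → V)} {ε : ℝ} (hε : ε ≤ 1) (hι : 1 < ε * Fintype.card ι)
    (hV : 0 < Fintype.card V) (hF : k * (#F + k) ≤ ε * Fintype.card V)
    (hS : ∀ i, 2 * ε * (Fintype.card V : ℝ) ^ k ≤ #(S i)) :
    ∃ i j, i ≠ j ∧ ∃ w, w ∈ S i ∧ w ∈ S j ∧ Function.Injective w ∧ ∀ l, w l ∉ F := by
  set n := Fintype.card V
  set good : Finset (Fin k → V) := {w | Function.Injective w ∧ ∀ l, w l ∉ F}
  have h_good : (1 - ε) * n ^ k ≤ #good :=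
    one_sub_mul_pow_le_card_filter_injective_avoiding hε hV hF
  have h_inter : ∀ i, ε * n ^ k ≤ #(S i ∩ good) := by
    intro i
    have h_union : (#(S i ∪ good) : ℝ) ≤ n ^ k := by
      have := card_le_univ (S i ∪ good)
      rw [Fintype.card_fun, Fintype.card_fin] at this
      exact_mod_cast this
    have h_incl_excl : (#(S i ∪ good) : ℝ) + #(S i ∩ good) = #(S i) + #good :=
      mod_cast card_union_add_card_inter (S i) good
    linarith [hS i]
  have h_sum : Fintype.card (Fin k → V) < ∑ i, #(S i ∩ good) := by
    rw [Fintype.card_fun, Fintype.card_fin, ← Nat.cast_lt (α := ℝ)]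
    push_cast
    calc n ^ k < ε * Fintype.card ι * n ^ k := lt_mul_of_one_lt_left (by positivity) hι
      _ = ∑ _i : ι, ε * n ^ k := by
          rw [sum_const, card_univ, nsmul_eq_mul]
          ring
      _ ≤ ∑ i, (#(S i ∩ good) : ℝ) := sum_le_sum fun i _ => h_inter i
  obtain ⟨i, j, hij, w, hwi, hwj⟩ := exists_ne_exists_mem_of_card_lt_sum_card h_sum
  rw [mem_inter] at hwi hwj
  exact ⟨i, j, hij, w, hwi.1, hwj.1, (mem_filter.1 hwi.2).2⟩

end Tuples

section Link

variable {V : Type*} [DecidableEq V] {H : Finset (Finset V)}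

/-- The link of the vertex `x` in the 3-graph `H`. The condition `y ≠ z` only matters when `H` is
not 3-uniform. -/
def linkGraph (H : Finset (Finset V)) (x : V) : SimpleGraph V where
  Adj y z := y ≠ z ∧ {x, y, z} ∈ H
  symm := ⟨fun y z h => ⟨h.1.symm, pair_comm y z ▸ h.2⟩⟩
  loopless := ⟨fun _ h => h.1 rfl⟩

lemma edge_mem_of_linkGraph_adj_middle {x y z : V} (h : (linkGraph H x).Adj y z) :
    {y, x, z} ∈ H :=
  insert_comm x y {z} ▸ h.2

lemma edge_mem_of_linkGraph_adj_last {x y z : V} (h : (linkGraph H x).Adj y z) :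
    {y, z, x} ∈ H :=
  pair_comm x z ▸ edge_mem_of_linkGraph_adj_middle h

lemma linkGraph_adj_iff (hH : ∀ e ∈ H, #e = 3) {x y z : V} :
    (linkGraph H x).Adj y z ↔ {x, y, z} ∈ H := by
  refine ⟨And.right, fun h => ⟨?_, h⟩⟩
  rintro rfl
  have h_card := hH _ h
  rw [pair_eq_singleton] at h_card
  exact absurd (card_le_two (a := x) (b := y)) (by omega)

lemma linkGraph_adj_left_comm (hH : ∀ e ∈ H, #e = 3) {x y z : V} :
    (linkGraph H x).Adj y z ↔ (linkGraph H y).Adj x z := by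
  rw [linkGraph_adj_iff hH, linkGraph_adj_iff hH, insert_comm]

lemma exists_eq_insert_pair_of_mem {e : Finset V} (he : #e = 3) {x : V} (hx : x ∈ e) :
    ∃ y z, y ≠ z ∧ e = {x, y, z} := by
  obtain ⟨y, z, hyz, h_erase⟩ := card_eq_two.1
    (show #(e.erase x) = 2 by rw [card_erase_of_mem hx, he])
  exact ⟨y, z, hyz, by rw [← insert_erase hx, h_erase]⟩

variable [Fintype V]

lemma degree_linkGraph_comm (hH : ∀ e ∈ H, #e = 3) (x y : V) :
    (linkGraph H x).degree y = (linkGraph H y).degree x := by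
  simp only [← SimpleGraph.card_neighborFinset_eq_degree]
  congr 1
  ext z
  simp only [SimpleGraph.mem_neighborFinset, linkGraph_adj_left_comm hH]

lemma card_filter_mem_le_card_edgeFinset_linkGraph (hH : ∀ e ∈ H, #e = 3) (x : V) :
    #{e ∈ H | x ∈ e} ≤ #(linkGraph H x).edgeFinset := by
  refine (card_le_card (t := (linkGraph H x).edgeFinset.image fun s => insert x s.toFinset)
    fun e he => ?_).trans card_image_le
  obtain ⟨heH, hxe⟩ := mem_filter.1 he
  obtain ⟨y, z, hyz, rfl⟩ := exists_eq_insert_pair_of_mem (hH e heH) hxe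
  refine mem_image.2 ⟨s(y, z), ?_, by rw [Sym2.toFinset_mk_eq]⟩
  rw [SimpleGraph.mem_edgeFinset, SimpleGraph.mem_edgeSet]
  exact ⟨hyz, heH⟩

/-- The vertices completing `{x, y}` to an edge of `H` whose degree in the link of `y` is at least
`t`; they are the candidates for the vertex of the path following `x, y`. -/
noncomputable def richExtensions (H : Finset (Finset V)) (x y : V) (t : ℝ) : Finset V :=
  {a ∈ (linkGraph H y).neighborFinset x | t ≤ (linkGraph H y).degree a}

lemma mem_richExtensions {x y a : V} {t : ℝ} :
    a ∈ richExtensions H x y t ↔ (linkGraph H y).Adj x a ∧ t ≤ (linkGraph H y).degree a := by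
  simp only [richExtensions, mem_filter, SimpleGraph.mem_neighborFinset]

lemma mul_sq_le_two_mul_card_edgeFinset_linkGraph (hH : ∀ e ∈ H, #e = 3) {x : V}
    (hV : 10000 ≤ Fintype.card V)
    (hx : (0.799 : ℝ) * (Fintype.card V - 1).choose 2 ≤ #{e ∈ H | x ∈ e}) :
    0.7985 * (Fintype.card V : ℝ) ^ 2 ≤ 2 * #(linkGraph H x).edgeFinset := by
  set n := Fintype.card V
  have hn : (10000 : ℝ) ≤ n := mod_cast hV
  have h_link : (#{e ∈ H | x ∈ e} : ℝ) ≤ #(linkGraph H x).edgeFinset :=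
    mod_cast card_filter_mem_le_card_edgeFinset_linkGraph hH x
  rw [Nat.cast_choose_two, Nat.cast_sub (by omega), Nat.cast_one] at hx
  nlinarith

lemma mul_pow_six_le_card_linkedWalks_linkGraph (hH : ∀ e ∈ H, #e = 3) {x y a z : V}
    (ha : 0.7985 * (Fintype.card V : ℝ) ^ 2 ≤ 2 * #(linkGraph H a).edgeFinset)
    (hz : 0.7985 * (Fintype.card V : ℝ) ^ 2 ≤ 2 * #(linkGraph H z).edgeFinset)
    (hxa : 0.32 * (Fintype.card V : ℝ) ≤ (linkGraph H x).degree a)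
    (hyz : 0.32 * (Fintype.card V : ℝ) ≤ (linkGraph H y).degree z) :
    2 * (4 / 10 ^ 14) * (Fintype.card V : ℝ) ^ 6 ≤
      #(linkedWalks (linkGraph H a) (linkGraph H z) x y) := by
  -- The cross densities are `0.2048` and `0.222`, both above `1 - 0.7985 + 2 * 0.001 = 0.2035`.
  have h_bound := mul_pow_six_le_card_linkedWalks (γ := 0.48) (δ := 0.3) (τ := 0.001)
    (by norm_num) (by norm_num) (by norm_num) (by norm_num) (by norm_num) (by norm_num)
    (by norm_num [crossDensity]) (by norm_num [crossDensity]) ha hz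
    (degree_linkGraph_comm hH x a ▸ hxa) (degree_linkGraph_comm hH y z ▸ hyz)
  exact (mul_le_mul_of_nonneg_right (by norm_num) (by positivity)).trans h_bound

end Link

section ConnectingPath

variable {V : Type*}

/-- The candidate for a tight path from `(u₀, u₁)` to `(v₀, v₁)`, interleaving `w` with the pairs
`(a, z)` and `(a', z')`. Apart from the first and the last one, every three consecutive terms are
one of `a, a', z', z` and two consecutive vertices of a walk required by `linkedWalks`. -/
def connectingPath (u₀ u₁ a a' z' z v₁ v₀ : V) (w : Fin 6 → V) : Fin 14 → V :=
  ![u₀, u₁, a, w 0, w 1, a', w 2, w 3, z', w 4, w 5, z, v₁, v₀]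

lemma connectingPath_injective {u₀ u₁ a a' z' z v₁ v₀ : V} {w : Fin 6 → V}
    (h_outer : [u₀, u₁, a, a', z', z, v₁, v₀].Nodup) (hw : Function.Injective w)
    (h_off : ∀ i, w i ∉ [u₀, u₁, a, a', z', z, v₁, v₀]) :
    Function.Injective (connectingPath u₀ u₁ a a' z' z v₁ v₀ w) := by
  have h_eq : List.ofFn (connectingPath u₀ u₁ a a' z' z v₁ v₀ w) =
      [u₀, u₁, a, w 0, w 1, a', w 2, w 3, z', w 4, w 5, z, v₁, v₀] := by
    simp [connectingPath, List.ofFn_succ]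
  have h_perm : ([u₀, u₁, a, a', z', z, v₁, v₀] ++ List.ofFn w).Perm
      [u₀, u₁, a, w 0, w 1, a', w 2, w 3, z', w 4, w 5, z, v₁, v₀] := by
    refine List.perm_iff_count.2 fun x => ?_
    simp only [List.ofFn_succ, Fin.isValue, Fin.succ_zero_eq_one, Fin.succ_one_eq_two,
      Fin.reduceSucc, List.ofFn_zero, List.cons_append, List.nil_append, List.count_cons]
    ring
  rw [← List.nodup_ofFn, h_eq, ← h_perm.nodup_iff]
  refine h_outer.append (List.nodup_ofFn.2 hw) fun x hx hxw => ?_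
  obtain ⟨i, rfl⟩ := List.mem_ofFn.1 hxw
  exact h_off i hx

end ConnectingPath

section Connecting

variable {V : Type} [DecidableEq V] [Fintype V] {H : Finset (Finset V)}

lemma coDeg_le_degree_linkGraph (hH : ∀ e ∈ H, #e = 3) {x y : V} (hxy : x ≠ y) :
    coDeg H x y ≤ (linkGraph H y).degree x := by
  rw [← SimpleGraph.card_neighborFinset_eq_degree]
  refine (card_le_card (t := ((linkGraph H y).neighborFinset x).image fun z => {y, x, z})
    fun e he => ?_).trans card_image_le
  obtain ⟨heH, hxe, hye⟩ := mem_filter.1 he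
  obtain ⟨p, q, -, rfl⟩ := exists_eq_insert_pair_of_mem (hH e heH) hye
  simp only [mem_image, SimpleGraph.mem_neighborFinset, linkGraph_adj_iff hH]
  simp only [mem_insert, mem_singleton, hxy, false_or] at hxe
  rcases hxe with rfl | rfl
  · exact ⟨q, heH, rfl⟩
  · exact ⟨p, pair_comm p x ▸ heH, by rw [pair_comm]⟩

lemma isTightPath_connectingPath {u₀ u₁ a a' z' z v₁ v₀ : V} {w : Fin 6 → V}
    (h_inj : Function.Injective (connectingPath u₀ u₁ a a' z' z v₁ v₀ w))
    (ha : (linkGraph H u₁).Adj u₀ a) (hz : (linkGraph H v₁).Adj v₀ z)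
    (hw : w ∈ linkedWalks (linkGraph H a) (linkGraph H z) u₁ v₁)
    (hw' : w ∈ linkedWalks (linkGraph H a') (linkGraph H z') u₁ v₁) :
    IsTightPath H (connectingPath u₀ u₁ a a' z' z v₁ v₀ w) := by
  refine ⟨h_inj, fun i hi => ?_⟩
  obtain ⟨⟨ha₀, ha₁, -, -⟩, -, -, hz₄, hz₅⟩ := (mem_filter.1 hw).2
  obtain ⟨⟨-, ha'₁, ha'₂, ha'₃⟩, hz'₃, hz'₄, hz'₅, -⟩ := (mem_filter.1 hw').2
  have hi' : i < 12 := by omega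
  interval_cases i
  · exact edge_mem_of_linkGraph_adj_middle ha
  · exact edge_mem_of_linkGraph_adj_middle ha₀
  · exact ha₁.2
  · exact edge_mem_of_linkGraph_adj_last ha'₁
  · exact edge_mem_of_linkGraph_adj_middle ha'₂
  · exact ha'₃.2
  · exact edge_mem_of_linkGraph_adj_last hz'₃
  · exact edge_mem_of_linkGraph_adj_middle hz'₄
  · exact hz'₅.2
  · exact edge_mem_of_linkGraph_adj_last hz₄
  · exact edge_mem_of_linkGraph_adj_middle hz₅
  · exact edge_mem_of_linkGraph_adj_middle hz.symm

lemma exists_isTightPath_of_mul_pow_le_card_linkedWalks {ε : ℝ} {K : ℕ} {u₀ u₁ v₀ v₁ : V}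
    {a z : Fin K ↪ V} (hε : ε ≤ 1) (hK : 1 < ε * K) (hV : 6 * (2 * K + 10) ≤ ε * Fintype.card V)
    (h_ends : [u₀, u₁, v₁, v₀].Nodup) (haz : ∀ i j, a i ≠ z j)
    (ha : ∀ i, (linkGraph H u₁).Adj u₀ (a i)) (ha_ends : ∀ i, a i ∉ [u₀, u₁, v₁, v₀])
    (hz : ∀ i, (linkGraph H v₁).Adj v₀ (z i)) (hz_ends : ∀ i, z i ∉ [u₀, u₁, v₁, v₀])
    (h_walks : ∀ i, 2 * ε * (Fintype.card V : ℝ) ^ 6 ≤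
      #(linkedWalks (linkGraph H (a i)) (linkGraph H (z i)) u₁ v₁)) :
    ∃ w : Fin 14 → V, IsTightPath H w ∧ w 0 = u₀ ∧ w 1 = u₁ ∧ w 13 = v₀ ∧ w 12 = v₁ := by
  set F : Finset V := [u₀, u₁, v₁, v₀].toFinset ∪ (univ.map a ∪ univ.map z)
  have hF : #F ≤ 4 + 2 * K :=
    calc #F ≤ #([u₀, u₁, v₁, v₀].toFinset) + (#(univ.map a) + #(univ.map z)) :=
          (card_union_le _ _).trans (by gcongr; exact card_union_le _ _)
      _ ≤ 4 + (K + K) := by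
          simp only [card_map, card_univ, Fintype.card_fin]
          gcongr
          exact List.toFinset_card_le _
      _ = 4 + 2 * K := by ring
  have hF_small : ((6 : ℕ) : ℝ) * (#F + (6 : ℕ)) ≤ ε * Fintype.card V := by
    have : (#F : ℝ) ≤ 4 + 2 * K := mod_cast hF
    push_cast
    linarith
  obtain ⟨i, j, hij, w, hwi, hwj, hw_inj, hwF⟩ := exists_ne_exists_injective_avoiding_mem hε
    (by rwa [Fintype.card_fin]) (Fintype.card_pos_iff.2 ⟨u₀⟩) hF_small h_walks
  have h_outer : [u₀, u₁, a i, a j, z j, z i, v₁, v₀].Nodup := by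
    have := a.injective.ne hij
    have := z.injective.ne hij
    grind
  have h_off : ∀ l, w l ∉ [u₀, u₁, a i, a j, z j, z i, v₁, v₀] := by
    intro l
    have h_notMem := hwF l
    simp only [F, mem_union, List.mem_toFinset, mem_map, mem_univ, true_and, not_or,
      not_exists] at h_notMem
    grind
  exact ⟨connectingPath u₀ u₁ (a i) (a j) (z j) (z i) v₁ v₀ w,
    isTightPath_connectingPath (connectingPath_injective h_outer hw_inj h_off)
      (ha i) (hz i) hwi hwj,
    rfl, rfl, rfl, rfl⟩

lemma mul_card_le_card_richExtensions (hH : ∀ e ∈ H, #e = 3) {x y : V}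
    (hxy : x ≠ y) (hV : 10000 ≤ Fintype.card V)
    (hy : 0.7985 * (Fintype.card V : ℝ) ^ 2 ≤ 2 * #(linkGraph H y).edgeFinset)
    (h_codeg : 0.33 * ((Fintype.card V : ℝ) - 2) ≤ coDeg H x y) :
    0.01 * (Fintype.card V : ℝ) ≤
      #(richExtensions H x y (0.32 * Fintype.card V)) := by
  have hn : (10000 : ℝ) ≤ Fintype.card V := mod_cast hV
  have h_degree : (coDeg H x y : ℝ) ≤ (linkGraph H y).degree x :=
    mod_cast coDeg_le_degree_linkGraph hH hxy
  have h_count := sub_mul_card_add_mul_degree_le (β := 0.32) (by norm_num) hy x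
  rw [richExtensions]
  linarith

lemma exists_isTightPath_of_card_richExtensions (hH : ∀ e ∈ H, #e = 3) {K : ℕ}
    {u₀ u₁ v₀ v₁ : V} (hK : 1 < (4 / 10 ^ 14 : ℝ) * K)
    (hV : 6 * (2 * K + 10) ≤ (4 / 10 ^ 14 : ℝ) * Fintype.card V)
    (h_link : ∀ x, 0.7985 * (Fintype.card V : ℝ) ^ 2 ≤ 2 * #(linkGraph H x).edgeFinset)
    (h_ends : [u₀, u₁, v₁, v₀].Nodup)
    (hu : 2 * K + 4 ≤ #(richExtensions H u₀ u₁ (0.32 * Fintype.card V)))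
    (hv : 2 * K + 4 ≤ #(richExtensions H v₀ v₁ (0.32 * Fintype.card V))) :
    ∃ w : Fin 14 → V, IsTightPath H w ∧ w 0 = u₀ ∧ w 1 = u₁ ∧ w 13 = v₀ ∧ w 12 = v₁ := by
  have h_card : #([u₀, u₁, v₁, v₀].toFinset) ≤ 4 := List.toFinset_card_le _
  obtain ⟨a, z, ha, hz, haz⟩ := exists_disjoint_embeddings_avoiding
    (K := K) (F := [u₀, u₁, v₁, v₀].toFinset)
    (A := richExtensions H u₀ u₁ (0.32 * Fintype.card V))
    (Z := richExtensions H v₀ v₁ (0.32 * Fintype.card V)) (by omega) (by omega)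
  simp only [mem_richExtensions, List.mem_toFinset] at ha hz
  have h_walks i := mul_pow_six_le_card_linkedWalks_linkGraph hH (h_link (a i)) (h_link (z i))
    (ha i).1.2 (hz i).1.2
  exact exists_isTightPath_of_mul_pow_le_card_linkedWalks (by norm_num) hK hV h_ends haz
    (fun i => (ha i).1.1) (fun i => (ha i).2) (fun i => (hz i).1.1) (fun i => (hz i).2) h_walks

end Connecting

/-- Connecting Lemma: there is `n₀` such that in every 3-graph on `n ≥ n₀` vertices with
minimum vertex degree at least `0.799·C(n-1,2)`, any two disjoint `0.33`-large pairs
`(u₀,u₁)` and `(v₀,v₁)` are connected by a tight path of length 12 (i.e. on 14 vertices)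
with these endpairs. -/
theorem stmt_9 :
    ∃ n₀ : ℕ, ∀ n : ℕ, n₀ ≤ n →
    ∀ (V : Type) [DecidableEq V] [Fintype V], Fintype.card V = n →
    ∀ H : Finset (Finset V), (∀ e ∈ H, e.card = 3) →
    (∀ v : V, (0.799 : ℝ) * ((n - 1).choose 2 : ℝ) ≤
      ((H.filter fun e => v ∈ e).card : ℝ)) →
    ∀ u₀ u₁ v₀ v₁ : V, u₀ ≠ u₁ → v₀ ≠ v₁ →
      u₀ ≠ v₀ → u₀ ≠ v₁ → u₁ ≠ v₀ → u₁ ≠ v₁ →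
      (0.33 : ℝ) * ((n : ℝ) - 2) ≤ (coDeg H u₀ u₁ : ℝ) →
      (0.33 : ℝ) * ((n : ℝ) - 2) ≤ (coDeg H v₀ v₁ : ℝ) →
      ∃ w : Fin 14 → V, IsTightPath H w ∧
        w 0 = u₀ ∧ w 1 = u₁ ∧ w 13 = v₀ ∧ w 12 = v₁ := by
  obtain ⟨K, hK⟩ := exists_nat_gt ((4 / 10 ^ 14 : ℝ)⁻¹)
  obtain ⟨n₀, hn₀⟩ := exists_nat_ge ((4 / 10 ^ 14 : ℝ)⁻¹ * (6 * (2 * K + 10)))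
  refine ⟨max n₀ 10000, ?_⟩
  rintro _ hn V _ _ rfl H hH h_degree u₀ u₁ v₀ v₁ hu hv h₀₀ h₀₁ h₁₀ h₁₁ hu_codeg hv_codeg
  obtain ⟨hn₀_le, hV⟩ := max_le_iff.1 hn
  have hK_large : 1 < (4 / 10 ^ 14 : ℝ) * K := (inv_lt_iff_one_lt_mul₀' (by norm_num)).1 hK
  have hV_large : 6 * (2 * K + 10) ≤ (4 / 10 ^ 14 : ℝ) * Fintype.card V :=
    (inv_mul_le_iff₀ (by norm_num)).1 (hn₀.trans (Nat.cast_le.2 hn₀_le))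
  have h_link (x : V) := mul_sq_le_two_mul_card_edgeFinset_linkGraph hH hV (h_degree x)
  have h_extensions {x y : V} (hxy : x ≠ y)
      (h_codeg : (0.33 : ℝ) * ((Fintype.card V : ℝ) - 2) ≤ coDeg H x y) :
      2 * K + 4 ≤ #(richExtensions H x y (0.32 * Fintype.card V)) := by
    have := mul_card_le_card_richExtensions hH hxy hV (h_link y) h_codeg
    rw [← Nat.cast_le (α := ℝ)]
    push_cast
    linarith
  have h_ends : [u₀, u₁, v₁, v₀].Nodup := by simp [hu, h₀₁, h₀₀, h₁₁, h₁₀, hv.symm]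
  exact exists_isTightPath_of_card_richExtensions hH hK_large hV_large h_link h_ends
    (h_extensions hu hu_codeg) (h_extensions hv hv_codeg)
end
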